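/- Let d ↦ n(d) be a function with n(d) → ∞ and d/n(d) → 0 as d → ∞. For each d, let X_1, …, X_{n(d)} be i.i.d. d-dimensional standard normal random vectors N_d(0, I). Let S_d be the sample covariance matrix, T_d Tyler's M-estimator of the sample, S*_d = √(n(d)/d)(S_d − I) and T*_d = √(n(d)/d)(T_d − I). Then for every fixed integer m ≥ 1, the random variable |(1/d)·tr((T*_d)^m) − (1/d)·tr((S*_d)^m)| converges in probability to 0 as d → ∞. -/

import Mathlib

open MeasureTheory ProbabilityTheory Filter Matrix

/-- The eigenvalues of a real symmetric `d × d` matrix, sorted in increasing order,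
so that `sortedEigs A i` is `λ_{i+1}(A)` with `λ_1(A) ≤ … ≤ λ_d(A)`
(junk value `0` if the matrix is not symmetric). -/
noncomputable def sortedEigs {d : ℕ} (A : Matrix (Fin d) (Fin d) ℝ) : Fin d → ℝ :=
  if h : A.IsHermitian then h.eigenvalues ∘ Tuple.sort h.eigenvalues else 0

/-- The spectral norm `‖A‖₂ = max (|λ_1(A)|, |λ_d(A)|)` of a symmetric matrix,
i.e. the largest absolute value of an eigenvalue. -/
noncomputable def specNorm {d : ℕ} (A : Matrix (Fin d) (Fin d) ℝ) : ℝ :=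
  ⨆ i : Fin d, |sortedEigs A i|

/-- `IsTyler X T` says that `T` is Tyler's M-estimator of the sample
`X : Fin n → (Fin d → ℝ)`: it is symmetric positive definite, normalized by
`tr T = d`, and satisfies Tyler's fixed-point equation
`T = (d/n) ∑_j (X_j X_jᵗ) / (X_jᵗ T⁻¹ X_j)`. -/
def IsTyler {d n : ℕ} (X : Fin n → Fin d → ℝ) (T : Matrix (Fin d) (Fin d) ℝ) : Prop :=
  T.PosDef ∧ T.trace = d ∧
    T = ((d : ℝ) / (n : ℝ)) •
      ∑ j : Fin n, (X j ⬝ᵥ T⁻¹ *ᵥ X j)⁻¹ • vecMulVec (X j) (X j)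

/-!
Tyler's estimator `T` depends only on the directions `u_j = X_j / |X_j|`, and the comparison with
`S` goes through their scatter matrix `M = (d/n) ∑ u_j u_jᵗ`.

The key is the lower bound `(d²/n) ∑ ⟨u_j, v⟩² ⟨u_j, w⟩² ≥ c |v|² |w|²`, uniform in `v` and `w`.
Testing Tyler's equation against the eigenvectors of `T⁻¹` for its largest and smallest eigenvalues,
it gives `‖T⁻¹ - 1‖ = O(‖M - 1‖) = O(√(d/n))`. It also makes the linearization of Tyler's equation
at the identity invertible: expanding `1 / ⟨u_j, T⁻¹ u_j⟩` to second order in `D = T⁻¹ - 1` shows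
that `‖T - M‖_F²` is at most a constant times `(d/n) ∑ ⟨u_j, (M - 1) u_j⟩² + d ‖D‖⁴`. Second moments
show that this, and likewise `‖M - S‖_F²`, is `o(d²/n)`. Since `A ↦ tr (A ^ m)` is Lipschitz
for the Frobenius norm on operator norm balls, the normalized traces then differ by `o(1)`.

The operator norm bounds on `M - 1` and `S - 1` and the lower bound on the quartic form hold with
high probability by exponential tail bounds on a finite net of the sphere.
-/

section Deterministic

open scoped Matrix.Norms.L2Operator

variable {ι κ : Type*} [Fintype ι] [Fintype κ]

/-! ### Quadratic forms, Frobenius norm and scatter matrices -/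

lemma norm_toLp_eq_sqrt_dotProduct (v : ι → ℝ) : ‖WithLp.toLp 2 v‖ = √(v ⬝ᵥ v) := by
  simp [EuclideanSpace.norm_eq, dotProduct, sq]

lemma dotProduct_self_nonneg (v : ι → ℝ) : 0 ≤ v ⬝ᵥ v := by
  simpa using dotProduct_star_self_nonneg v

lemma sq_dotProduct_le (v w : ι → ℝ) : (v ⬝ᵥ w) ^ 2 ≤ (v ⬝ᵥ v) * (w ⬝ᵥ w) := by
  simpa only [dotProduct, ← sq] using Finset.sum_mul_sq_le_sq_mul_sq Finset.univ v w

lemma dotProduct_mulVec_comm {A : Matrix ι ι ℝ} (hA : A.IsHermitian) (v w : ι → ℝ) :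
    v ⬝ᵥ A *ᵥ w = w ⬝ᵥ A *ᵥ v := by
  rw [dotProduct_mulVec, ← mulVec_transpose, ← conjTranspose_eq_transpose_of_trivial, hA.eq,
    dotProduct_comm]

/-- The squared Frobenius norm. Mathlib's Frobenius norm is not used because its instance
competes with that of the `ℓ²` operator norm. -/
def frobSq (A : Matrix ι ι ℝ) : ℝ := ∑ i, ∑ j, A i j ^ 2

lemma frobSq_nonneg (A : Matrix ι ι ℝ) : 0 ≤ frobSq A := by
  unfold frobSq; positivity

lemma frobSq_neg (A : Matrix ι ι ℝ) : frobSq (-A) = frobSq A := by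
  simp [frobSq]

lemma frobSq_smul (r : ℝ) (A : Matrix ι ι ℝ) : frobSq (r • A) = r ^ 2 * frobSq A := by
  simp [frobSq, mul_pow, Finset.mul_sum]

lemma frobSq_add_le (A B : Matrix ι ι ℝ) : frobSq (A + B) ≤ 2 * frobSq A + 2 * frobSq B := by
  simp only [frobSq, Finset.mul_sum, ← Finset.sum_add_distrib, Matrix.add_apply]
  gcongr with i _ j _
  linarith [add_sq_le (a := A i j) (b := B i j)]

lemma frobSq_sub_le (A B : Matrix ι ι ℝ) : frobSq (A - B) ≤ 2 * frobSq A + 2 * frobSq B := by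
  simpa only [sub_eq_add_neg, frobSq_neg] using frobSq_add_le A (-B)

lemma trace_mul_eq_sum (A B : Matrix ι ι ℝ) : (A * B).trace = ∑ i, ∑ j, A i j * B j i := by
  simp [trace, mul_apply]

lemma frobSq_eq_trace_mul_self {A : Matrix ι ι ℝ} (hA : A.IsHermitian) :
    frobSq A = (A * A).trace := by
  rw [trace_mul_eq_sum, frobSq]
  refine Finset.sum_congr rfl fun i _ => Finset.sum_congr rfl fun j _ => ?_
  rw [← hA.apply i j, star_trivial, sq]

lemma sq_trace_mul_le (A B : Matrix ι ι ℝ) : (A * B).trace ^ 2 ≤ frobSq A * frobSq B := by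
  have hB : frobSq B = ∑ i, ∑ j, B j i ^ 2 := Finset.sum_comm
  rw [trace_mul_eq_sum, hB, frobSq]
  simp only [← Fintype.sum_prod_type']
  exact Finset.sum_mul_sq_le_sq_mul_sq _ _ _

lemma frobSq_eq_sum_col (A : Matrix ι ι ℝ) : frobSq A = ∑ j, A.col j ⬝ᵥ A.col j := by
  simp only [frobSq, dotProduct, col_apply, ← sq]
  exact Finset.sum_comm

/-- The scatter matrix `∑ j, f j • u j (u j)ᵀ` of the vectors `u j` with weights `f j`. The sample
covariance, the right-hand side of Tyler's equation and the error terms of its linearization are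
all of this form. -/
def scatter (f : κ → ℝ) (u : κ → ι → ℝ) : Matrix ι ι ℝ := ∑ j, f j • vecMulVec (u j) (u j)

lemma isHermitian_scatter {ι : Type*} (f : κ → ℝ) (u : κ → ι → ℝ) : (scatter f u).IsHermitian := by
  ext i k
  simp [scatter, Matrix.sum_apply, vecMulVec_apply, mul_comm (u _ i)]

lemma scatter_mulVec (f : κ → ℝ) (u : κ → ι → ℝ) (w : ι → ℝ) :
    scatter f u *ᵥ w = ∑ j, (f j * (u j ⬝ᵥ w)) • u j := by
  simp [scatter, sum_mulVec, smul_mulVec, vecMulVec_mulVec, smul_smul]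

lemma dotProduct_scatter_mulVec (f : κ → ℝ) (u : κ → ι → ℝ) (v w : ι → ℝ) :
    v ⬝ᵥ scatter f u *ᵥ w = ∑ j, f j * ((u j ⬝ᵥ v) * (u j ⬝ᵥ w)) := by
  rw [scatter_mulVec, dotProduct_sum]
  refine Finset.sum_congr rfl fun j _ => ?_
  rw [dotProduct_smul, smul_eq_mul, dotProduct_comm v]; ring

lemma trace_mul_scatter (A : Matrix ι ι ℝ) (f : κ → ℝ) (u : κ → ι → ℝ) :
    (A * scatter f u).trace = ∑ j, f j * (u j ⬝ᵥ A *ᵥ u j) := by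
  simp only [scatter, Matrix.mul_sum, trace_sum, mul_smul_comm, trace_smul, mul_vecMulVec,
    trace_vecMulVec, smul_eq_mul, dotProduct_comm]

lemma trace_scatter (f : κ → ℝ) (u : κ → ι → ℝ) :
    (scatter f u).trace = ∑ j, f j * (u j ⬝ᵥ u j) := by
  simp [scatter, trace_sum, trace_smul, trace_vecMulVec]

/-! ### Operator norm -/

variable [DecidableEq ι]

lemma frobSq_one : frobSq (1 : Matrix ι ι ℝ) = Fintype.card ι := by
  simp [frobSq, one_apply]

lemma sqrt_mulVec_dotProduct_self_le (A : Matrix ι ι ℝ) (v : ι → ℝ) :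
    √((A *ᵥ v) ⬝ᵥ (A *ᵥ v)) ≤ ‖A‖ * √(v ⬝ᵥ v) := by
  rw [← norm_toLp_eq_sqrt_dotProduct, ← norm_toLp_eq_sqrt_dotProduct]
  exact l2_opNorm_mulVec A (WithLp.toLp 2 v)

lemma mulVec_dotProduct_self_le (A : Matrix ι ι ℝ) (v : ι → ℝ) :
    (A *ᵥ v) ⬝ᵥ (A *ᵥ v) ≤ ‖A‖ ^ 2 * (v ⬝ᵥ v) := by
  have h := pow_le_pow_left₀ (Real.sqrt_nonneg _) (sqrt_mulVec_dotProduct_self_le A v) 2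
  rwa [mul_pow, Real.sq_sqrt (dotProduct_self_nonneg _),
    Real.sq_sqrt (dotProduct_self_nonneg _)] at h

lemma abs_dotProduct_mulVec_le (A : Matrix ι ι ℝ) (v w : ι → ℝ) :
    |v ⬝ᵥ A *ᵥ w| ≤ ‖A‖ * (√(v ⬝ᵥ v) * √(w ⬝ᵥ w)) := by
  calc |v ⬝ᵥ A *ᵥ w| ≤ √(v ⬝ᵥ v) * √((A *ᵥ w) ⬝ᵥ (A *ᵥ w)) := by
        rw [← Real.sqrt_mul (dotProduct_self_nonneg v)]
        exact Real.abs_le_sqrt (sq_dotProduct_le _ _)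
    _ ≤ √(v ⬝ᵥ v) * (‖A‖ * √(w ⬝ᵥ w)) := by gcongr; exact sqrt_mulVec_dotProduct_self_le A w
    _ = ‖A‖ * (√(v ⬝ᵥ v) * √(w ⬝ᵥ w)) := by ring

lemma abs_dotProduct_mulVec_self_le (A : Matrix ι ι ℝ) (v : ι → ℝ) :
    |v ⬝ᵥ A *ᵥ v| ≤ ‖A‖ * (v ⬝ᵥ v) := by
  simpa only [Real.mul_self_sqrt (dotProduct_self_nonneg v)] using abs_dotProduct_mulVec_le A v v

lemma l2_opNorm_le_of_abs_dotProduct_mulVec_le {A : Matrix ι ι ℝ} (hA : A.IsHermitian) {t : ℝ}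
    (ht : 0 ≤ t) (h : ∀ v : ι → ℝ, |v ⬝ᵥ A *ᵥ v| ≤ t * (v ⬝ᵥ v)) : ‖A‖ ≤ t := by
  have hsymm : (toEuclideanCLM (n := ι) (𝕜 := ℝ) A).toLinearMap.IsSymmetric := fun x y => by
    have := dotProduct_mulVec_comm hA x.ofLp y.ofLp
    simp_all [EuclideanSpace.inner_eq_star_dotProduct, ofLp_toEuclideanCLM, dotProduct_comm]
  rw [cstar_norm_def, ContinuousLinearMap.norm_eq_iSup_rayleighQuotient _ hsymm]
  refine Real.iSup_le (fun x => ?_) ht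
  have hx : x.ofLp ⬝ᵥ x.ofLp = ‖x‖ ^ 2 := by
    rw [EuclideanSpace.real_norm_sq_eq]; simp [dotProduct, sq]
  rw [ContinuousLinearMap.rayleighQuotient, ContinuousLinearMap.reApplyInnerSelf_apply,
    real_inner_comm, inner_toEuclideanCLM, RCLike.re_to_real, ← hx, abs_div,
    abs_of_nonneg (dotProduct_self_nonneg _)]
  exact div_le_of_le_mul₀ (dotProduct_self_nonneg _) ht (by simpa using h x.ofLp)

lemma frobSq_mul_le (A B : Matrix ι ι ℝ) : frobSq (A * B) ≤ ‖A‖ ^ 2 * frobSq B := by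
  rw [frobSq_eq_sum_col, frobSq_eq_sum_col, Finset.mul_sum]
  exact Finset.sum_le_sum fun j _ => mulVec_dotProduct_self_le A (B.col j)

lemma frobSq_le_norm_sq_mul_card (A : Matrix ι ι ℝ) :
    frobSq A ≤ ‖A‖ ^ 2 * Fintype.card ι := by
  simpa only [mul_one, frobSq_one] using frobSq_mul_le A 1

lemma abs_trace_mul_le (A B : Matrix ι ι ℝ) :
    |(A * B).trace| ≤ ‖A‖ * √(Fintype.card ι * frobSq B) := by
  calc |(A * B).trace| ≤ √(‖A‖ ^ 2 * (Fintype.card ι * frobSq B)) := by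
        refine Real.abs_le_sqrt ((sq_trace_mul_le A B).trans ?_)
        rw [← mul_assoc]
        exact mul_le_mul_of_nonneg_right (frobSq_le_norm_sq_mul_card A) (frobSq_nonneg B)
    _ = ‖A‖ * √(Fintype.card ι * frobSq B) := by
        rw [Real.sqrt_mul (sq_nonneg _), Real.sqrt_sq (norm_nonneg A)]

lemma abs_trace_mul_pow_sub_pow_le {A B : Matrix ι ι ℝ} {K : ℝ} (hA : ‖A‖ ≤ K) (hB : ‖B‖ ≤ K)
    (m : ℕ) (C : Matrix ι ι ℝ) :
    |(C * (A ^ m - B ^ m)).trace| ≤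
      ‖C‖ * (m * K ^ (m - 1) * √(Fintype.card ι * frobSq (A - B))) := by
  have hK : 0 ≤ K := (norm_nonneg A).trans hA
  set N := √(Fintype.card ι * frobSq (A - B))
  induction m generalizing C with
  | zero => simp
  | succ m ih =>
    have split : (C * (A ^ (m + 1) - B ^ (m + 1))).trace =
        (C * A ^ m * (A - B)).trace + (B * C * (A ^ m - B ^ m)).trace := by
      rw [mul_assoc B C, trace_mul_comm B, ← trace_add]
      congr 1
      rw [pow_succ, pow_succ]
      noncomm_ring
    have hpow : ‖C * A ^ m‖ ≤ ‖C‖ * K ^ m := by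
      rcases m.eq_zero_or_pos with rfl | hm
      · simp
      · exact (norm_mul_le _ _).trans <| by
          gcongr; exact (norm_pow_le' A hm).trans (pow_le_pow_left₀ (norm_nonneg A) hA m)
    have hmul : ‖B * C‖ ≤ ‖C‖ * K := (norm_mul_le B C).trans <| by
      rw [mul_comm]; gcongr
    have hmK : (m : ℝ) * K ^ (m - 1) * K = m * K ^ m := by
      cases m <;> simp [pow_succ, mul_assoc]
    calc |(C * (A ^ (m + 1) - B ^ (m + 1))).trace|
        ≤ |(C * A ^ m * (A - B)).trace| + |(B * C * (A ^ m - B ^ m)).trace| := by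
          rw [split]; exact abs_add_le _ _
      _ ≤ ‖C‖ * K ^ m * N + ‖C‖ * K * (m * K ^ (m - 1) * N) := by
          refine add_le_add ((abs_trace_mul_le _ _).trans ?_) ((ih _).trans ?_) <;> gcongr
      _ = ‖C‖ * ((m + 1 : ℕ) * K ^ (m + 1 - 1) * N) := by
          rw [Nat.add_sub_cancel]; push_cast
          linear_combination ‖C‖ * N * hmK

lemma abs_trace_pow_sub_trace_pow_le [Nonempty ι] {A B : Matrix ι ι ℝ} {K : ℝ} (hA : ‖A‖ ≤ K)
    (hB : ‖B‖ ≤ K) (m : ℕ) :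
    |(A ^ m).trace - (B ^ m).trace| ≤
      m * K ^ (m - 1) * √(Fintype.card ι * frobSq (A - B)) := by
  simpa only [one_mul, norm_one, trace_sub] using abs_trace_mul_pow_sub_pow_le hA hB m 1

end Deterministic

section QuarticForm

variable {ι κ : Type*} [Fintype ι] [Fintype κ]

/-! ### Lower bounds on quartic forms -/

/-- The quartic form `∑ j, (u j ⬝ᵥ v)² (u j ⬝ᵥ w)²`, scaled by `q`, dominates `c ‖v‖² ‖w‖²`. For
`n` unit vectors in dimension `d` the natural scale is `q = d² / n`. This is the nondegeneracy of
the sample that makes the linearization of Tyler's equation invertible. -/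
def HasQuarticLowerBound (c q : ℝ) (u : κ → ι → ℝ) : Prop :=
  ∀ v w : ι → ℝ, c * (v ⬝ᵥ v) * (w ⬝ᵥ w) ≤ q * ∑ j, (u j ⬝ᵥ v) ^ 2 * (u j ⬝ᵥ w) ^ 2

lemma exists_eq_scatter_one_of_posSemidef {ι : Type*} [Finite ι] {B : Matrix ι ι ℝ}
    (hB : B.PosSemidef) : ∃ (m : ℕ) (a : Fin m → ι → ℝ), B = scatter 1 a := by
  obtain ⟨m, a, ha⟩ := posSemidef_iff_eq_sum_vecMulVec.mp hB
  exact ⟨m, a, by simpa [scatter] using ha⟩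

lemma HasQuarticLowerBound.le_sum_of_posSemidef {c q : ℝ} {u : κ → ι → ℝ}
    (h : HasQuarticLowerBound c q u) {B : Matrix ι ι ℝ} (hB : B.PosSemidef) (v : ι → ℝ) :
    c * (v ⬝ᵥ v) * B.trace ≤ q * ∑ j, (u j ⬝ᵥ v) ^ 2 * (u j ⬝ᵥ B *ᵥ u j) := by
  obtain ⟨m, a, rfl⟩ := exists_eq_scatter_one_of_posSemidef hB
  simp only [trace_scatter, dotProduct_scatter_mulVec, Pi.one_apply, one_mul]
  calc c * (v ⬝ᵥ v) * ∑ i, a i ⬝ᵥ a i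
      ≤ ∑ i, q * ∑ j, (u j ⬝ᵥ v) ^ 2 * (u j ⬝ᵥ a i) ^ 2 := by
        rw [Finset.mul_sum]; exact Finset.sum_le_sum fun i _ => h v (a i)
    _ = q * ∑ j, (u j ⬝ᵥ v) ^ 2 * ∑ i, (a i ⬝ᵥ u j) * (a i ⬝ᵥ u j) := by
        rw [← Finset.mul_sum, Finset.sum_comm]
        simp only [Finset.mul_sum, sq, dotProduct_comm (a _)]

lemma mulVec_dotProduct_mulVec_self {A : Matrix ι ι ℝ} (hA : A.IsHermitian) (v : ι → ℝ) :
    (A *ᵥ v) ⬝ᵥ (A *ᵥ v) = v ⬝ᵥ (A * A) *ᵥ v := by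
  rw [← mulVec_mulVec, dotProduct_mulVec_comm hA]

lemma sum_sq_mul_mul_sum_sub_sq (τ p : ι → ℝ) :
    (∑ i, τ i ^ 2 * p i) * ∑ i, p i - (∑ i, τ i * p i) ^ 2 =
      1 / 2 * ∑ i, ∑ k, (τ i - τ k) ^ 2 * (p i * p k) := by
  have expand : ∀ i k, (τ i - τ k) ^ 2 * (p i * p k) =
      τ i ^ 2 * p i * p k + p i * (τ k ^ 2 * p k) - 2 * (τ i * p i * (τ k * p k)) :=
    fun i k => by ring
  simp only [expand, Finset.sum_sub_distrib, Finset.sum_add_distrib, ← Finset.mul_sum,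
    ← Finset.sum_mul]
  ring

section Diagonalization

variable [DecidableEq ι]

lemma exists_eq_mul_diagonal_mul_transpose {A : Matrix ι ι ℝ} (hA : A.IsHermitian) :
    ∃ (U : Matrix ι ι ℝ) (τ : ι → ℝ), Uᵀ * U = 1 ∧ A = U * diagonal τ * Uᵀ := by
  refine ⟨hA.eigenvectorUnitary, hA.eigenvalues, ?_, ?_⟩
  · simpa [star_eq_conjTranspose] using Unitary.coe_star_mul_self hA.eigenvectorUnitary
  · simpa [Unitary.conjStarAlgAut_apply, star_eq_conjTranspose, Function.comp_def]
      using hA.spectral_theorem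

lemma dotProduct_mul_diagonal_mul_transpose_mulVec (U : Matrix ι ι ℝ) (τ v : ι → ℝ) :
    v ⬝ᵥ (U * diagonal τ * Uᵀ) *ᵥ v = ∑ i, τ i * (v ⬝ᵥ U.col i) ^ 2 := by
  rw [mul_assoc, ← mulVec_mulVec, dotProduct_mulVec, ← mulVec_mulVec, mulVec_transpose]
  simp only [dotProduct, mulVec_diagonal, vecMul, col_apply, sq]
  exact Finset.sum_congr rfl fun i _ => by ring

lemma trace_mul_diagonal_mul_transpose {U : Matrix ι ι ℝ} (hU : Uᵀ * U = 1) (τ : ι → ℝ) :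
    (U * diagonal τ * Uᵀ).trace = ∑ i, τ i := by
  rw [trace_mul_cycle, hU, one_mul, trace_diagonal]

lemma mul_diagonal_mul_transpose_mul_self {U : Matrix ι ι ℝ} (hU : Uᵀ * U = 1) (τ : ι → ℝ) :
    U * diagonal τ * Uᵀ * (U * diagonal τ * Uᵀ) = U * diagonal (fun i => τ i ^ 2) * Uᵀ := by
  calc U * diagonal τ * Uᵀ * (U * diagonal τ * Uᵀ)
      = U * diagonal τ * (Uᵀ * U) * diagonal τ * Uᵀ := by simp only [mul_assoc]
    _ = U * diagonal (fun i => τ i ^ 2) * Uᵀ := by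
      rw [hU, mul_one, mul_assoc U, diagonal_mul_diagonal]; simp only [sq]

end Diagonalization

-- Diagonalizing `B`, both sides become sums over pairs of eigenvalues of squared differences.
lemma HasQuarticLowerBound.le_sum_of_isHermitian {c q : ℝ} {u : κ → ι → ℝ}
    (h : HasQuarticLowerBound c q u) (hu : ∀ j, u j ⬝ᵥ u j = 1) {B : Matrix ι ι ℝ}
    (hB : B.IsHermitian) :
    c * (Fintype.card ι * frobSq B - B.trace ^ 2) ≤
      q * ∑ j, ((B *ᵥ u j) ⬝ᵥ (B *ᵥ u j) - (u j ⬝ᵥ B *ᵥ u j) ^ 2) := by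
  classical
  obtain ⟨U, τ, hU, hBU⟩ := exists_eq_mul_diagonal_mul_transpose hB
  have hcol : ∀ i, U.col i ⬝ᵥ U.col i = 1 := fun i => by
    rw [← one_apply_eq i, ← hU]; rfl
  have hsum : ∀ j, ∑ i, (u j ⬝ᵥ U.col i) ^ 2 = 1 := fun j => by
    have := dotProduct_mul_diagonal_mul_transpose_mulVec U (fun _ => 1) (u j)
    simpa [mul_eq_one_comm.mp hU, hu] using this.symm
  have hleft : Fintype.card ι * frobSq B - B.trace ^ 2 =
      1 / 2 * ∑ i, ∑ k, (τ i - τ k) ^ 2 := by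
    rw [frobSq_eq_trace_mul_self hB, hBU, mul_diagonal_mul_transpose_mul_self hU,
      trace_mul_diagonal_mul_transpose hU, trace_mul_diagonal_mul_transpose hU, mul_comm]
    simpa using sum_sq_mul_mul_sum_sub_sq τ 1
  have hright : ∀ j, (B *ᵥ u j) ⬝ᵥ (B *ᵥ u j) - (u j ⬝ᵥ B *ᵥ u j) ^ 2 =
      1 / 2 * ∑ i, ∑ k, (τ i - τ k) ^ 2 * ((u j ⬝ᵥ U.col i) ^ 2 * (u j ⬝ᵥ U.col k) ^ 2) := by
    intro j
    rw [← sum_sq_mul_mul_sum_sub_sq, hsum, mul_one, mulVec_dotProduct_mulVec_self hB, hBU,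
      mul_diagonal_mul_transpose_mul_self hU, dotProduct_mul_diagonal_mul_transpose_mulVec,
      dotProduct_mul_diagonal_mul_transpose_mulVec]
  calc c * (Fintype.card ι * frobSq B - B.trace ^ 2)
      = 1 / 2 * ∑ i, ∑ k, (τ i - τ k) ^ 2 * (c * (U.col i ⬝ᵥ U.col i) * (U.col k ⬝ᵥ U.col k)) := by
        simp only [hleft, hcol, mul_one, ← Finset.sum_mul]; ring
    _ ≤ 1 / 2 * ∑ i, ∑ k, (τ i - τ k) ^ 2 *
          (q * ∑ j, (u j ⬝ᵥ U.col i) ^ 2 * (u j ⬝ᵥ U.col k) ^ 2) := by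
        gcongr ?_ * ∑ i, ∑ k, ?_ * ?_ with i _ k _; exact h _ _
    _ = q * ∑ j, ((B *ᵥ u j) ⬝ᵥ (B *ᵥ u j) - (u j ⬝ᵥ B *ᵥ u j) ^ 2) := by
        simp only [hright, Finset.mul_sum]
        rw [Finset.sum_comm_cycle]
        refine Finset.sum_congr rfl fun j _ => ?_
        rw [Finset.sum_comm]
        exact Finset.sum_congr rfl fun i _ => Finset.sum_congr rfl fun k _ => by ring

end QuarticForm

section TylerOperatorNorm

open scoped Matrix.Norms.L2Operator

/-! ### Operator norm bound for Tyler's estimator -/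

lemma exists_max_eigenvector {ι : Type*} [Fintype ι] [Nonempty ι] {A : Matrix ι ι ℝ}
    (hA : A.IsHermitian) :
    ∃ (a : ℝ) (e : ι → ℝ), e ⬝ᵥ e = 1 ∧ A *ᵥ e = a • e ∧ ∀ v, v ⬝ᵥ A *ᵥ v ≤ a * (v ⬝ᵥ v) := by
  classical
  obtain ⟨U, τ, hU, rfl⟩ := exists_eq_mul_diagonal_mul_transpose hA
  obtain ⟨i, hi⟩ := Finite.exists_max τ
  have hUi : Uᵀ *ᵥ U.col i = Pi.single i 1 := by
    rw [← mulVec_single_one, mulVec_mulVec, hU, one_mulVec]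
  refine ⟨τ i, U.col i, ?_, ?_, fun v => ?_⟩
  · rw [← one_apply_eq i, ← hU]; rfl
  · rw [← mulVec_mulVec, hUi, ← mulVec_mulVec, diagonal_mulVec_single, mul_one,
      ← mulVec_single_one U i, ← mulVec_smul, ← Pi.single_smul, smul_eq_mul, mul_one]
  · have hv : ∑ k, (v ⬝ᵥ U.col k) ^ 2 = v ⬝ᵥ v := by
      have := dotProduct_mul_diagonal_mul_transpose_mulVec U (fun _ => 1) v
      simpa [mul_eq_one_comm.mp hU] using this.symm
    rw [dotProduct_mul_diagonal_mul_transpose_mulVec, ← hv, Finset.mul_sum]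
    exact Finset.sum_le_sum fun k _ => mul_le_mul_of_nonneg_right (hi k) (sq_nonneg _)

lemma exists_min_eigenvector {ι : Type*} [Fintype ι] [Nonempty ι] {A : Matrix ι ι ℝ}
    (hA : A.IsHermitian) :
    ∃ (b : ℝ) (e : ι → ℝ), e ⬝ᵥ e = 1 ∧ A *ᵥ e = b • e ∧ ∀ v, b * (v ⬝ᵥ v) ≤ v ⬝ᵥ A *ᵥ v := by
  obtain ⟨a, e, he, hae, hmax⟩ := exists_max_eigenvector hA.neg
  refine ⟨-a, e, he, ?_, fun v => ?_⟩
  · rw [neg_smul, ← hae, neg_mulVec, neg_neg]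
  · have := hmax v
    rw [neg_mulVec, dotProduct_neg] at this
    linarith

-- The two bounds on `1 / q` for `b ≤ q ≤ a` are the tangent at `a` and the chord through `a` and
-- `b` of the convex function `q ↦ 1 / q`, multiplied by `a²` and `a b`.
lemma two_mul_sub_le_sq_mul_inv {a q : ℝ} (hq : 0 < q) : 2 * a - q ≤ a ^ 2 * q⁻¹ := by
  rw [← div_eq_mul_inv, le_div_iff₀ hq]
  nlinarith [sq_nonneg (a - q)]

lemma mul_mul_inv_le_add_sub {a b q : ℝ} (hq : 0 < q) (hbq : b ≤ q) (hqa : q ≤ a) :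
    a * b * q⁻¹ ≤ a + b - q := by
  rw [← div_eq_mul_inv, div_le_iff₀ hq]
  nlinarith [mul_nonneg (sub_nonneg.mpr hbq) (sub_nonneg.mpr hqa)]

lemma norm_le_two_of_mul_eq_one {R : Type*} [NormedRing R] [NormOneClass R] {x y : R}
    (hxy : x * y = 1) (hy : ‖y - 1‖ ≤ 1 / 2) : ‖x‖ ≤ 2 := by
  have hx : x = 1 - x * (y - 1) := by rw [mul_sub, hxy, mul_one, sub_sub_cancel]
  have hle : ‖x‖ ≤ 1 + ‖x‖ * (1 / 2) := by
    calc ‖x‖ = ‖1 - x * (y - 1)‖ := congrArg _ hx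
      _ ≤ 1 + ‖x * (y - 1)‖ := (norm_sub_le _ _).trans_eq (by rw [norm_one])
      _ ≤ 1 + ‖x‖ * (1 / 2) := by gcongr; exact (norm_mul_le _ _).trans (by gcongr)
  linarith

lemma norm_sub_one_le_of_mul_eq_one {R : Type*} [NormedRing R] [NormOneClass R] {x y : R}
    (hxy : x * y = 1) (hy : ‖y - 1‖ ≤ 1 / 2) : ‖x - 1‖ ≤ 2 * ‖y - 1‖ := by
  have hx : x - 1 = -(x * (y - 1)) := by rw [mul_sub, hxy, mul_one, neg_sub]
  rw [hx, norm_neg]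
  exact (norm_mul_le _ _).trans (by gcongr; exact norm_le_two_of_mul_eq_one hxy hy)

namespace IsTyler

variable {d n : ℕ} {u : Fin n → Fin d → ℝ} {T : Matrix (Fin d) (Fin d) ℝ} {c : ℝ}

lemma eq_scatter (hT : IsTyler u T) :
    T = scatter (fun j => d / n * (u j ⬝ᵥ T⁻¹ *ᵥ u j)⁻¹) u := by
  conv_lhs => rw [hT.2.2]
  simp only [scatter, Finset.smul_sum, smul_smul]

lemma isHermitian_inv (hT : IsTyler u T) : T⁻¹.IsHermitian := hT.1.isHermitian.inv

lemma mul_inv (hT : IsTyler u T) : T * T⁻¹ = 1 :=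
  mul_nonsing_inv T ((isUnit_iff_isUnit_det T).mp hT.1.isUnit)

lemma dotProduct_inv_mulVec_pos (hT : IsTyler u T) {v : Fin d → ℝ} (hv : v ⬝ᵥ v = 1) :
    0 < v ⬝ᵥ T⁻¹ *ᵥ v := by
  have hv0 : v ≠ 0 := by rintro rfl; simp at hv
  simpa using hT.1.inv.dotProduct_mulVec_pos hv0

lemma sum_inv_eq (hT : IsTyler u T) (hd : 0 < d) (hu : ∀ j, u j ⬝ᵥ u j = 1) :
    ∑ j, (u j ⬝ᵥ T⁻¹ *ᵥ u j)⁻¹ = n := by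
  have htrace := hT.2.1
  rw [hT.eq_scatter, trace_scatter] at htrace
  simp only [hu, mul_one, ← Finset.mul_sum] at htrace
  have hd' : (d : ℝ) ≠ 0 := Nat.cast_ne_zero.mpr hd.ne'
  have hn : (n : ℝ) ≠ 0 := by rintro hn; simp [hn, hd'.symm] at htrace
  rw [div_mul_eq_mul_div, div_eq_iff hn] at htrace
  exact mul_left_cancel₀ hd' htrace

lemma mulVec_of_inv_mulVec (hT : IsTyler u T) {a : ℝ} {e : Fin d → ℝ}
    (hae : T⁻¹ *ᵥ e = a • e) : a • T *ᵥ e = e := by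
  rw [← mulVec_smul, ← hae, mulVec_mulVec, hT.mul_inv, one_mulVec]

lemma sum_inv_mul_sq_eq (hT : IsTyler u T) {a : ℝ} {e : Fin d → ℝ} (he : e ⬝ᵥ e = 1)
    (hae : T⁻¹ *ᵥ e = a • e) :
    a * (d / n * ∑ j, (u j ⬝ᵥ e) ^ 2 * (u j ⬝ᵥ T⁻¹ *ᵥ u j)⁻¹) = 1 := by
  have h := congrArg (e ⬝ᵥ ·) (hT.mulVec_of_inv_mulVec hae)
  simp only [he, dotProduct_smul, smul_eq_mul] at h
  rw [hT.eq_scatter, dotProduct_scatter_mulVec] at h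
  rw [← h, Finset.mul_sum]
  congr 1
  exact Finset.sum_congr rfl fun j _ => by ring

lemma abs_sum_sq_sub_one_le {e : Fin d → ℝ} (he : e ⬝ᵥ e = 1) :
    |d / n * ∑ j, (u j ⬝ᵥ e) ^ 2 - 1| ≤ ‖scatter (fun _ => (d : ℝ) / n) u - 1‖ := by
  have h := abs_dotProduct_mulVec_self_le (scatter (fun _ => (d : ℝ) / n) u - 1) e
  simpa only [sub_mulVec, one_mulVec, dotProduct_sub, dotProduct_scatter_mulVec, he, mul_one,
    ← Finset.mul_sum, ← sq] using h

lemma mul_sub_trace_inv_le (hT : IsTyler u T) (hu : ∀ j, u j ⬝ᵥ u j = 1)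
    (hq : HasQuarticLowerBound c (d ^ 2 / n) u) {a : ℝ} (ha : 0 ≤ a) {e : Fin d → ℝ}
    (he : e ⬝ᵥ e = 1) (hae : T⁻¹ *ᵥ e = a • e) (hmax : ∀ v, v ⬝ᵥ T⁻¹ *ᵥ v ≤ a * (v ⬝ᵥ v)) :
    c * (a * d - T⁻¹.trace) ≤ d * (‖scatter (fun _ => (d : ℝ) / n) u - 1‖ * a) := by
  have hpsd : (a • 1 - T⁻¹).PosSemidef := .of_dotProduct_mulVec_nonneg
    ((isHermitian_one.smul (.all _)).sub hT.isHermitian_inv) fun v => by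
      simpa [sub_mulVec, smul_mulVec] using hmax v
  calc c * (a * d - T⁻¹.trace)
      ≤ d ^ 2 / n * ∑ j, (u j ⬝ᵥ e) ^ 2 * (a - u j ⬝ᵥ T⁻¹ *ᵥ u j) := by
        simpa [he, hu, sub_mulVec, smul_mulVec, trace_sub] using hq.le_sum_of_posSemidef hpsd e
    _ ≤ d ^ 2 / n * ∑ j, (u j ⬝ᵥ e) ^ 2 * (a ^ 2 * (u j ⬝ᵥ T⁻¹ *ᵥ u j)⁻¹ - a) := by
        gcongr ?_ * ∑ j, ?_ * ?_ with j
        linarith [two_mul_sub_le_sq_mul_inv (a := a) (hT.dotProduct_inv_mulVec_pos (hu j))]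
    _ = d * -((d / n * ∑ j, (u j ⬝ᵥ e) ^ 2 - 1) * a) := by
        simp only [mul_sub, Finset.sum_sub_distrib, mul_left_comm _ (a ^ 2), ← Finset.mul_sum,
          ← Finset.sum_mul]
        linear_combination d * a * hT.sum_inv_mul_sq_eq he hae
    _ ≤ d * (‖scatter (fun _ => (d : ℝ) / n) u - 1‖ * a) := by
        rw [← neg_mul]
        gcongr
        exact (neg_le_abs _).trans (abs_sum_sq_sub_one_le he)

lemma trace_inv_sub_mul_le (hT : IsTyler u T) (hu : ∀ j, u j ⬝ᵥ u j = 1)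
    (hq : HasQuarticLowerBound c (d ^ 2 / n) u) {a b : ℝ} (ha : 0 ≤ a) {e : Fin d → ℝ}
    (he : e ⬝ᵥ e = 1) (hbe : T⁻¹ *ᵥ e = b • e) (hmax : ∀ v, v ⬝ᵥ T⁻¹ *ᵥ v ≤ a * (v ⬝ᵥ v))
    (hmin : ∀ v, b * (v ⬝ᵥ v) ≤ v ⬝ᵥ T⁻¹ *ᵥ v) :
    c * (T⁻¹.trace - b * d) ≤ d * (‖scatter (fun _ => (d : ℝ) / n) u - 1‖ * a) := by
  have hpsd : (T⁻¹ - b • 1).PosSemidef := .of_dotProduct_mulVec_nonneg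
    (hT.isHermitian_inv.sub (isHermitian_one.smul (.all _))) fun v => by
      simpa [sub_mulVec, smul_mulVec] using hmin v
  calc c * (T⁻¹.trace - b * d)
      ≤ d ^ 2 / n * ∑ j, (u j ⬝ᵥ e) ^ 2 * (u j ⬝ᵥ T⁻¹ *ᵥ u j - b) := by
        simpa [he, hu, sub_mulVec, smul_mulVec, trace_sub] using hq.le_sum_of_posSemidef hpsd e
    _ ≤ d ^ 2 / n * ∑ j, (u j ⬝ᵥ e) ^ 2 * (a - a * b * (u j ⬝ᵥ T⁻¹ *ᵥ u j)⁻¹) := by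
        gcongr ?_ * ∑ j, ?_ * ?_ with j
        have hmin' := hmin (u j)
        have hmax' := hmax (u j)
        rw [hu, mul_one] at hmin' hmax'
        linarith [mul_mul_inv_le_add_sub (hT.dotProduct_inv_mulVec_pos (hu j)) hmin' hmax']
    _ = d * ((d / n * ∑ j, (u j ⬝ᵥ e) ^ 2 - 1) * a) := by
        simp only [mul_sub, Finset.sum_sub_distrib, mul_left_comm _ (a * b), ← Finset.mul_sum,
          ← Finset.sum_mul]
        linear_combination - d * a * hT.sum_inv_mul_sq_eq he hbe
    _ ≤ d * (‖scatter (fun _ => (d : ℝ) / n) u - 1‖ * a) := by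
        gcongr
        exact (le_abs_self _).trans (abs_sum_sq_sub_one_le he)

lemma univ_nonempty (hT : IsTyler u T) (hd : 0 < d) :
    (Finset.univ : Finset (Fin n)).Nonempty := by
  by_contra hempty
  have htrace := hT.2.1
  rw [hT.eq_scatter, trace_scatter, Finset.not_nonempty_iff_eq_empty.mp hempty,
    Finset.sum_empty] at htrace
  exact hd.ne (mod_cast htrace)

lemma exists_one_le_dotProduct_inv_mulVec (hT : IsTyler u T) (hd : 0 < d)
    (hu : ∀ j, u j ⬝ᵥ u j = 1) : ∃ j, 1 ≤ u j ⬝ᵥ T⁻¹ *ᵥ u j := by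
  obtain ⟨j, -, hj⟩ := Finset.exists_le_of_sum_le (f := fun j => (u j ⬝ᵥ T⁻¹ *ᵥ u j)⁻¹)
    (g := fun _ => 1) (hT.univ_nonempty hd) (by simp [hT.sum_inv_eq hd hu])
  exact ⟨j, (inv_le_one₀ (hT.dotProduct_inv_mulVec_pos (hu j))).mp hj⟩

lemma exists_dotProduct_inv_mulVec_le_one (hT : IsTyler u T) (hd : 0 < d)
    (hu : ∀ j, u j ⬝ᵥ u j = 1) : ∃ j, u j ⬝ᵥ T⁻¹ *ᵥ u j ≤ 1 := by
  obtain ⟨j, -, hj⟩ := Finset.exists_le_of_sum_le (f := fun _ => 1)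
    (g := fun j => (u j ⬝ᵥ T⁻¹ *ᵥ u j)⁻¹) (hT.univ_nonempty hd) (by simp [hT.sum_inv_eq hd hu])
  exact ⟨j, (one_le_inv₀ (hT.dotProduct_inv_mulVec_pos (hu j))).mp hj⟩

lemma norm_inv_sub_one_le (hT : IsTyler u T) (hd : 0 < d) (hu : ∀ j, u j ⬝ᵥ u j = 1)
    (hc : 0 < c) (hq : HasQuarticLowerBound c (d ^ 2 / n) u)
    (hM : 8 * ‖scatter (fun _ => (d : ℝ) / n) u - 1‖ ≤ c) :
    ‖T⁻¹ - 1‖ ≤ 4 / c * ‖scatter (fun _ => (d : ℝ) / n) u - 1‖ := by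
  have : Nonempty (Fin d) := ⟨⟨0, hd⟩⟩
  obtain ⟨a, e, he, hae, hmax⟩ := exists_max_eigenvector hT.isHermitian_inv
  obtain ⟨b, f, hf, hbf, hmin⟩ := exists_min_eigenvector hT.isHermitian_inv
  set t := ‖scatter (fun _ => (d : ℝ) / n) u - 1‖
  have ha : 1 ≤ a := by
    obtain ⟨j, hj⟩ := hT.exists_one_le_dotProduct_inv_mulVec hd hu
    simpa only [hu, mul_one] using hj.trans (hmax (u j))
  have hb : b ≤ 1 := by
    obtain ⟨j, hj⟩ := hT.exists_dotProduct_inv_mulVec_le_one hd hu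
    simpa only [hu, mul_one] using (hmin (u j)).trans hj
  have hgap : c * (a - b) ≤ 2 * t * a := by
    have hd' : (0 : ℝ) < d := Nat.cast_pos.mpr hd
    refine le_of_mul_le_mul_left ?_ hd'
    linarith [hT.mul_sub_trace_inv_le hu hq (by linarith) he hae hmax,
      hT.trace_inv_sub_mul_le hu hq (by linarith) hf hbf hmax hmin]
  have ha2 : a ≤ 2 := by nlinarith
  have hab : a - b ≤ 4 / c * t := by
    rw [div_mul_eq_mul_div, le_div_iff₀ hc]
    nlinarith [mul_le_mul_of_nonneg_left ha2 (norm_nonneg _ : 0 ≤ t)]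
  refine l2_opNorm_le_of_abs_dotProduct_mulVec_le (hT.isHermitian_inv.sub isHermitian_one)
    (by positivity) fun v => ?_
  have hv := dotProduct_self_nonneg v
  rw [sub_mulVec, one_mulVec, dotProduct_sub, abs_le]
  constructor <;> nlinarith [hmax v, hmin v]

end IsTyler

end TylerOperatorNorm

section TylerFrobeniusNorm

open scoped Matrix.Norms.L2Operator

/-! ### Frobenius norm bound for Tyler's estimator -/

section Scatter

variable {ι κ : Type*} [Fintype ι] [Fintype κ]

lemma scatter_sub {ι : Type*} (f g : κ → ℝ) (u : κ → ι → ℝ) :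
    scatter f u - scatter g u = scatter (fun j => f j - g j) u := by
  simp only [scatter, sub_smul, Finset.sum_sub_distrib]

lemma norm_scatter_le_mul [DecidableEq ι] {f g : κ → ℝ} {C : ℝ} (hC : 0 ≤ C)
    (h : ∀ j, |g j| ≤ C * f j) (u : κ → ι → ℝ) : ‖scatter g u‖ ≤ C * ‖scatter f u‖ := by
  refine l2_opNorm_le_of_abs_dotProduct_mulVec_le (isHermitian_scatter g u) (by positivity)
    fun v => ?_
  calc |v ⬝ᵥ scatter g u *ᵥ v| ≤ ∑ j, |g j| * ((u j ⬝ᵥ v) * (u j ⬝ᵥ v)) := by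
        rw [dotProduct_scatter_mulVec]
        refine (Finset.abs_sum_le_sum_abs _ _).trans_eq (Finset.sum_congr rfl fun j _ => ?_)
        rw [abs_mul, abs_mul_self]
    _ ≤ ∑ j, C * f j * ((u j ⬝ᵥ v) * (u j ⬝ᵥ v)) :=
        Finset.sum_le_sum fun j _ => mul_le_mul_of_nonneg_right (h j) (mul_self_nonneg _)
    _ = C * (v ⬝ᵥ scatter f u *ᵥ v) := by
        simp only [dotProduct_scatter_mulVec, Finset.mul_sum, mul_assoc]
    _ ≤ C * (‖scatter f u‖ * (v ⬝ᵥ v)) := by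
        gcongr
        exact (le_abs_self _).trans (abs_dotProduct_mulVec_self_le _ _)
    _ = C * ‖scatter f u‖ * (v ⬝ᵥ v) := (mul_assoc _ _ _).symm

lemma sum_mul_mulVec_dotProduct_self_le [DecidableEq ι] (f : κ → ℝ) (u : κ → ι → ℝ)
    (B : Matrix ι ι ℝ) :
    ∑ j, f j * ((B *ᵥ u j) ⬝ᵥ (B *ᵥ u j)) ≤ ‖scatter f u‖ * frobSq B := by
  calc ∑ j, f j * ((B *ᵥ u j) ⬝ᵥ (B *ᵥ u j)) = ∑ i, B i ⬝ᵥ scatter f u *ᵥ B i := by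
        simp only [dotProduct_scatter_mulVec]
        rw [Finset.sum_comm]
        refine Finset.sum_congr rfl fun j _ => ?_
        rw [dotProduct, Finset.mul_sum]
        refine Finset.sum_congr rfl fun i _ => ?_
        rw [mulVec, dotProduct_comm]
    _ ≤ ∑ i, ‖scatter f u‖ * (B i ⬝ᵥ B i) :=
        Finset.sum_le_sum fun i _ => (le_abs_self _).trans (abs_dotProduct_mulVec_self_le _ _)
    _ = ‖scatter f u‖ * frobSq B := by
        simp only [← Finset.mul_sum, frobSq, dotProduct, ← sq]

lemma two_mul_frobSq_scatter_le {r : ℝ} (hr : 0 ≤ r) (x : κ → ℝ) (u : κ → ι → ℝ) :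
    2 * frobSq (scatter (fun j => r * x j) u) ≤
      r * ∑ j, x j ^ 2 + r * ∑ j, (u j ⬝ᵥ scatter (fun j => r * x j) u *ᵥ u j) ^ 2 := by
  rw [frobSq_eq_trace_mul_self (isHermitian_scatter _ u), trace_mul_scatter, ← mul_add,
    ← Finset.sum_add_distrib, Finset.mul_sum, Finset.mul_sum]
  refine Finset.sum_le_sum fun j _ => ?_
  rw [mul_assoc, mul_left_comm, ← mul_assoc 2]
  exact mul_le_mul_of_nonneg_left (two_mul_le_add_sq _ _) hr

lemma sq_trace_mul_scatter_le (r : ℝ) (x : κ → ℝ) (u : κ → ι → ℝ) (A : Matrix ι ι ℝ) :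
    (A * scatter (fun j => r * x j) u).trace ^ 2 ≤
      (r * ∑ j, x j ^ 2) * (r * ∑ j, (u j ⬝ᵥ A *ᵥ u j) ^ 2) := by
  calc (A * scatter (fun j => r * x j) u).trace ^ 2
      = r ^ 2 * (∑ j, x j * (u j ⬝ᵥ A *ᵥ u j)) ^ 2 := by
        simp only [trace_mul_scatter, mul_assoc, ← Finset.mul_sum, mul_pow]
    _ ≤ r ^ 2 * ((∑ j, x j ^ 2) * ∑ j, (u j ⬝ᵥ A *ᵥ u j) ^ 2) := by
        gcongr
        exact Finset.sum_mul_sq_le_sq_mul_sq _ _ _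
    _ = _ := by ring

end Scatter

lemma abs_le_add_of_sq_le_mul {f p q c : ℝ} (hc : 0 < c) (hp : 0 ≤ p) (hq : 0 ≤ q)
    (h : f ^ 2 ≤ p * q) : |f| ≤ c / 16 * p + 4 / c * q := by
  refine abs_le_of_sq_le_sq (h.trans ?_) (by positivity)
  have hpq : (c / 16 * p + 4 / c * q) ^ 2 = (c / 16 * p - 4 / c * q) ^ 2 + p * q := by
    field_simp; ring
  rw [hpq]
  exact le_add_of_nonneg_left (sq_nonneg _)

lemma le_of_quadratic_balance {c b y z E Q f g : ℝ} (hc : 0 < c) (hc1 : c ≤ 1) (hb : 0 ≤ b)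
    (hE : 0 ≤ E) (hbQ : 2 * b ≤ y + Q) (hQ : Q ≤ (1 - c / 2) * b + 16 * E)
    (hy : y = b - f - g) (hf : |f| ≤ c / 16 * y + 4 / c * z)
    (hg : |g| ≤ c / 16 * b + 4 / c * (40 * E)) :
    b ≤ 16 / c ^ 2 * (z + 44 * E) := by
  have hy_lower : (1 + c / 2) * b - 16 * E ≤ y := by linarith
  have hy_upper : (1 - c / 16) * y ≤ (1 + c / 16) * b + 4 / c * (z + 40 * E) := by
    linarith [(abs_le.1 hf).1, (abs_le.1 hg).1]
  have hb_upper : c / 4 * b ≤ 16 * E + 4 / c * (z + 40 * E) := by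
    have hlower := mul_le_mul_of_nonneg_left hy_lower (show 0 ≤ 1 - c / 16 by linarith)
    have hcb : 0 ≤ (1 - c) * c * b := mul_nonneg (mul_nonneg (by linarith) hc.le) hb
    nlinarith [mul_nonneg hc.le hE, mul_nonneg hc.le hb]
  have hE_le : 16 * E ≤ 4 / c * (4 * E) := by
    rw [div_mul_eq_mul_div, le_div_iff₀ hc]; nlinarith
  calc b = 4 / c * (c / 4 * b) := by field_simp
    _ ≤ 4 / c * (4 / c * (4 * E) + 4 / c * (z + 40 * E)) := by gcongr; linarith
    _ = 16 / c ^ 2 * (z + 44 * E) := by field_simp; ring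

variable {d n : ℕ}

lemma trace_scatter_div {u : Fin n → Fin d → ℝ} (hu : ∀ j, u j ⬝ᵥ u j = 1) (hn : n ≠ 0) :
    (scatter (fun _ => (d : ℝ) / n) u).trace = d := by
  have : (n : ℝ) ≠ 0 := Nat.cast_ne_zero.2 hn
  simp only [trace_scatter, hu, mul_one, Finset.sum_const, Finset.card_univ, Fintype.card_fin,
    nsmul_eq_mul]
  field_simp

lemma HasQuarticLowerBound.sum_sq_le {u : Fin n → Fin d → ℝ} {c : ℝ}
    (hq : HasQuarticLowerBound c ((d : ℝ) ^ 2 / n) u) (hd : 0 < d) (hu : ∀ j, u j ⬝ᵥ u j = 1)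
    {B : Matrix (Fin d) (Fin d) ℝ} (hB : B.IsHermitian) :
    (d : ℝ) / n * ∑ j, (u j ⬝ᵥ B *ᵥ u j) ^ 2 ≤
      (‖scatter (fun _ => (d : ℝ) / n) u‖ - c) * frobSq B + c * B.trace ^ 2 / d := by
  have hd' : (0 : ℝ) < d := Nat.cast_pos.2 hd
  have hvar := hq.le_sum_of_isHermitian hu hB
  have hcol := sum_mul_mulVec_dotProduct_self_le (fun _ => (d : ℝ) / n) u B
  rw [← Finset.mul_sum] at hcol
  rw [Fintype.card_fin, Finset.sum_sub_distrib] at hvar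
  rw [← mul_le_mul_iff_right₀ hd', mul_add, mul_div_cancel₀ _ hd'.ne']
  have := mul_le_mul_of_nonneg_left hcol hd'.le
  rw [sq (d : ℝ), mul_div_assoc, mul_assoc, mul_sub] at hvar
  linarith

/-- The first-order term of Tyler's equation at the matrix `1 + D`: the weighted scatter matrix with
weights `(d / n) u_jᵀ D u_j`. -/
noncomputable def linearTerm (u : Fin n → Fin d → ℝ) (D : Matrix (Fin d) (Fin d) ℝ) :
    Matrix (Fin d) (Fin d) ℝ :=
  scatter (fun j => (d : ℝ) / n * (u j ⬝ᵥ D *ᵥ u j)) u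

/-- The second-order remainder of Tyler's equation at the matrix `1 + D`, coming from
`(1 + x)⁻¹ = 1 - x + x ^ 2 / (1 + x)` with `x = u_jᵀ D u_j`. -/
noncomputable def remainderTerm (u : Fin n → Fin d → ℝ) (D : Matrix (Fin d) (Fin d) ℝ) :
    Matrix (Fin d) (Fin d) ℝ :=
  scatter (fun j => (d : ℝ) / n * ((u j ⬝ᵥ D *ᵥ u j) ^ 2 / (1 + u j ⬝ᵥ D *ᵥ u j))) u

lemma norm_remainderTerm_le {u : Fin n → Fin d → ℝ} (hu : ∀ j, u j ⬝ᵥ u j = 1)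
    {D : Matrix (Fin d) (Fin d) ℝ} (hD : ‖D‖ ≤ 1 / 2) :
    ‖remainderTerm u D‖ ≤ 2 * ‖D‖ ^ 2 * ‖scatter (fun _ => (d : ℝ) / n) u‖ := by
  refine norm_scatter_le_mul (by positivity) (fun j => ?_) u
  have hx : |u j ⬝ᵥ D *ᵥ u j| ≤ ‖D‖ := by simpa [hu j] using abs_dotProduct_mulVec_self_le D (u j)
  have hpos : 1 / 2 ≤ 1 + u j ⬝ᵥ D *ᵥ u j := by linarith [(abs_le.1 hx).1]
  have hquot : (u j ⬝ᵥ D *ᵥ u j) ^ 2 / (1 + u j ⬝ᵥ D *ᵥ u j) ≤ 2 * ‖D‖ ^ 2 := by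
    rw [div_le_iff₀ (by linarith)]
    nlinarith [sq_le_sq' (abs_le.1 hx).1 (abs_le.1 hx).2]
  rw [abs_of_nonneg (mul_nonneg (by positivity) (div_nonneg (sq_nonneg _) (by linarith))),
    mul_comm (2 * ‖D‖ ^ 2)]
  gcongr

lemma frobSq_remainderTerm_le {u : Fin n → Fin d → ℝ} (hu : ∀ j, u j ⬝ᵥ u j = 1)
    (hM : ‖scatter (fun _ => (d : ℝ) / n) u‖ ≤ 2) {D : Matrix (Fin d) (Fin d) ℝ}
    (hD : ‖D‖ ≤ 1 / 2) :
    frobSq (remainderTerm u D) ≤ 16 * (‖D‖ ^ 4 * d) := by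
  calc frobSq (remainderTerm u D) ≤ (2 * ‖D‖ ^ 2 * 2) ^ 2 * d := by
        refine (frobSq_le_norm_sq_mul_card _).trans ?_
        rw [Fintype.card_fin]
        gcongr
        exact (norm_remainderTerm_le hu hD).trans (by gcongr)
    _ = 16 * (‖D‖ ^ 4 * d) := by ring

namespace IsTyler

variable {u : Fin n → Fin d → ℝ} {T : Matrix (Fin d) (Fin d) ℝ} {c : ℝ}

lemma sub_scatter_eq (hT : IsTyler u T) (hu : ∀ j, u j ⬝ᵥ u j = 1) :
    T - scatter (fun _ => (d : ℝ) / n) u =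
      remainderTerm u (T⁻¹ - 1) - linearTerm u (T⁻¹ - 1) := by
  conv_lhs => rw [hT.eq_scatter]
  rw [remainderTerm, linearTerm, scatter_sub, scatter_sub]
  congr 1 with j
  have hx : u j ⬝ᵥ T⁻¹ *ᵥ u j = 1 + u j ⬝ᵥ (T⁻¹ - 1) *ᵥ u j := by
    rw [sub_mulVec, dotProduct_sub, one_mulVec, hu j]; ring
  have hpos := hT.dotProduct_inv_mulVec_pos (hu j)
  rw [hx] at hpos ⊢
  field_simp
  ring

lemma inv_sub_one_eq (hT : IsTyler u T) (hu : ∀ j, u j ⬝ᵥ u j = 1) :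
    T⁻¹ - 1 = linearTerm u (T⁻¹ - 1) - (scatter (fun _ => (d : ℝ) / n) u - 1) -
      (remainderTerm u (T⁻¹ - 1) - (T⁻¹ - 1) * T * (T⁻¹ - 1)) := by
  have hexpand : (T⁻¹ - 1) * T * (T⁻¹ - 1) = T⁻¹ - 1 + (T - 1) := by
    rw [sub_mul T⁻¹, mul_eq_one_comm.1 hT.mul_inv, mul_sub, sub_mul, one_mul, one_mul, hT.mul_inv,
      mul_one]
    abel
  rw [hexpand, ← sub_add_sub_cancel T (scatter (fun _ => (d : ℝ) / n) u) 1, hT.sub_scatter_eq hu]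
  abel

lemma trace_linearTerm (hT : IsTyler u T) (hd : 0 < d) (hu : ∀ j, u j ⬝ᵥ u j = 1) :
    (linearTerm u (T⁻¹ - 1)).trace = (remainderTerm u (T⁻¹ - 1)).trace := by
  have hn : n ≠ 0 := by
    rintro rfl; simpa using hT.univ_nonempty hd
  have htrace := congrArg trace (hT.sub_scatter_eq hu)
  rw [trace_sub, trace_sub, hT.2.1, trace_scatter_div hu hn, sub_self] at htrace
  linarith

lemma mul_sum_sq_eq (hT : IsTyler u T) (hu : ∀ j, u j ⬝ᵥ u j = 1) :
    (d : ℝ) / n * ∑ j, (u j ⬝ᵥ (T⁻¹ - 1) *ᵥ u j) ^ 2 =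
      frobSq (linearTerm u (T⁻¹ - 1)) -
        ((scatter (fun _ => (d : ℝ) / n) u - 1) * linearTerm u (T⁻¹ - 1)).trace -
        ((remainderTerm u (T⁻¹ - 1) - (T⁻¹ - 1) * T * (T⁻¹ - 1)) *
          linearTerm u (T⁻¹ - 1)).trace := by
  have hB : (linearTerm u (T⁻¹ - 1)).IsHermitian := isHermitian_scatter _ _
  rw [frobSq_eq_trace_mul_self hB, ← trace_sub, ← trace_sub, ← sub_mul,
    ← sub_mul, ← hT.inv_sub_one_eq hu, linearTerm, trace_mul_scatter, Finset.mul_sum]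
  exact Finset.sum_congr rfl fun j _ => by ring

lemma frobSq_remainderTerm_sub_le (hT : IsTyler u T) (hd : 0 < d) (hD : ‖T⁻¹ - 1‖ ≤ 1 / 2)
    (hR : frobSq (remainderTerm u (T⁻¹ - 1)) ≤ 16 * (‖T⁻¹ - 1‖ ^ 4 * d)) :
    frobSq (remainderTerm u (T⁻¹ - 1) - (T⁻¹ - 1) * T * (T⁻¹ - 1)) ≤
      40 * (‖T⁻¹ - 1‖ ^ 4 * d) := by
  have : Nonempty (Fin d) := ⟨⟨0, hd⟩⟩
  have hnorm : ‖(T⁻¹ - 1) * T * (T⁻¹ - 1)‖ ≤ 2 * ‖T⁻¹ - 1‖ ^ 2 := by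
    calc ‖(T⁻¹ - 1) * T * (T⁻¹ - 1)‖ ≤ ‖T⁻¹ - 1‖ * ‖T‖ * ‖T⁻¹ - 1‖ := norm_mul₃_le
      _ ≤ ‖T⁻¹ - 1‖ * 2 * ‖T⁻¹ - 1‖ := by
          gcongr
          exact norm_le_two_of_mul_eq_one hT.mul_inv hD
      _ = 2 * ‖T⁻¹ - 1‖ ^ 2 := by ring
  have hfrob : frobSq ((T⁻¹ - 1) * T * (T⁻¹ - 1)) ≤ 4 * (‖T⁻¹ - 1‖ ^ 4 * d) := by
    calc frobSq ((T⁻¹ - 1) * T * (T⁻¹ - 1)) ≤ (2 * ‖T⁻¹ - 1‖ ^ 2) ^ 2 * d := by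
          refine (frobSq_le_norm_sq_mul_card _).trans ?_
          rw [Fintype.card_fin]
          gcongr
      _ = 4 * (‖T⁻¹ - 1‖ ^ 4 * d) := by ring
  linarith [frobSq_sub_le (remainderTerm u (T⁻¹ - 1)) ((T⁻¹ - 1) * T * (T⁻¹ - 1))]

lemma frobSq_linearTerm_le (hT : IsTyler u T) (hd : 0 < d) (hu : ∀ j, u j ⬝ᵥ u j = 1)
    (hc : 0 < c) (hc1 : c ≤ 1) (hq : HasQuarticLowerBound c ((d : ℝ) ^ 2 / n) u)
    (hM : ‖scatter (fun _ => (d : ℝ) / n) u‖ ≤ 1 + c / 2) (hD : ‖T⁻¹ - 1‖ ≤ 1 / 2) :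
    frobSq (linearTerm u (T⁻¹ - 1)) ≤ 16 / c ^ 2 *
      ((d : ℝ) / n * ∑ j, (u j ⬝ᵥ (scatter (fun _ => (d : ℝ) / n) u - 1) *ᵥ u j) ^ 2 +
        44 * (‖T⁻¹ - 1‖ ^ 4 * d)) := by
  have hd' : (0 : ℝ) < d := Nat.cast_pos.2 hd
  have hR := frobSq_remainderTerm_le hu (hM.trans (by linarith)) hD
  have hrem := hT.frobSq_remainderTerm_sub_le hd hD hR
  have htrace : (linearTerm u (T⁻¹ - 1)).trace ^ 2 ≤ d * frobSq (remainderTerm u (T⁻¹ - 1)) := by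
    simpa [frobSq_one, hT.trace_linearTerm hd hu] using
      sq_trace_mul_le 1 (remainderTerm u (T⁻¹ - 1))
  refine le_of_quadratic_balance hc hc1 (frobSq_nonneg _) (by positivity)
    (two_mul_frobSq_scatter_le (by positivity) _ u) ?_ (hT.mul_sum_sq_eq hu)
    (abs_le_add_of_sq_le_mul hc (by positivity) (by positivity)
      (sq_trace_mul_scatter_le _ _ u _)) ?_
  · refine (hq.sum_sq_le hd hu (isHermitian_scatter _ _)).trans (add_le_add ?_ ?_)
    · exact mul_le_mul_of_nonneg_right (by linarith) (frobSq_nonneg _)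
    · rw [div_le_iff₀ hd']
      calc c * (linearTerm u (T⁻¹ - 1)).trace ^ 2
          ≤ 1 * (d * (16 * (‖T⁻¹ - 1‖ ^ 4 * d))) := by
            gcongr
            exact htrace.trans (by gcongr)
        _ = _ := by ring
  · refine abs_le_add_of_sq_le_mul hc (frobSq_nonneg _) (by positivity) ?_
    rw [mul_comm (frobSq _)]
    exact (sq_trace_mul_le _ _).trans (mul_le_mul_of_nonneg_right hrem (frobSq_nonneg _))

theorem frobSq_sub_scatter_le (hT : IsTyler u T) (hd : 0 < d) (hu : ∀ j, u j ⬝ᵥ u j = 1)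
    (hc : 0 < c) (hc1 : c ≤ 1) (hq : HasQuarticLowerBound c ((d : ℝ) ^ 2 / n) u)
    (hM : ‖scatter (fun _ => (d : ℝ) / n) u - 1‖ ≤ c / 2) (hD : ‖T⁻¹ - 1‖ ≤ 1 / 2) :
    frobSq (T - scatter (fun _ => (d : ℝ) / n) u) ≤ 1440 / c ^ 2 *
      ((d : ℝ) / n * ∑ j, (u j ⬝ᵥ (scatter (fun _ => (d : ℝ) / n) u - 1) *ᵥ u j) ^ 2 +
        ‖T⁻¹ - 1‖ ^ 4 * d) := by
  have : Nonempty (Fin d) := ⟨⟨0, hd⟩⟩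
  have hM' : ‖scatter (fun _ => (d : ℝ) / n) u‖ ≤ 1 + c / 2 := by
    linarith [norm_le_norm_add_norm_sub' (scatter (fun _ => (d : ℝ) / n) u) 1,
      norm_one (α := Matrix (Fin d) (Fin d) ℝ)]
  have hR := frobSq_remainderTerm_le hu (hM'.trans (by linarith)) hD
  have hB := hT.frobSq_linearTerm_le hd hu hc hc1 hq hM' hD
  have hsub := frobSq_sub_le (remainderTerm u (T⁻¹ - 1)) (linearTerm u (T⁻¹ - 1))
  set z := (d : ℝ) / n * ∑ j, (u j ⬝ᵥ (scatter (fun _ => (d : ℝ) / n) u - 1) *ᵥ u j) ^ 2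
  set E := ‖T⁻¹ - 1‖ ^ 4 * (d : ℝ)
  have : 0 ≤ E := by positivity
  have : 0 ≤ z := by positivity
  rw [hT.sub_scatter_eq hu]
  calc frobSq (remainderTerm u (T⁻¹ - 1) - linearTerm u (T⁻¹ - 1))
      ≤ 1 * (32 * E) + 2 * (16 / c ^ 2 * (z + 44 * E)) := by linarith
    _ ≤ 1 / c ^ 2 * (32 * E) + 2 * (16 / c ^ 2 * (z + 44 * E)) := by
        gcongr
        exact one_le_one_div (by positivity) (pow_le_one₀ hc.le hc1)
    _ = 1440 / c ^ 2 * (z + E) - 1408 / c ^ 2 * z := by ring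
    _ ≤ 1440 / c ^ 2 * (z + E) := sub_le_self _ (by positivity)

end IsTyler

end TylerFrobeniusNorm

section Nets

open scoped Matrix.Norms.L2Operator NNReal

/-! ### Nets of the sphere -/

lemma exists_finset_of_coveringNumber_le {X : Type*} [PseudoMetricSpace X] {ε : ℝ≥0} {A : Set X}
    {k : ℕ} (h : Metric.coveringNumber ε A ≤ k) :
    ∃ N : Finset X, ↑N ⊆ A ∧ N.card ≤ k ∧ ∀ x ∈ A, ∃ y ∈ N, dist x y ≤ ε := by
  obtain ⟨N, hNA, hfin, hcover, hcard⟩ :=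
    Metric.exists_set_encard_eq_coveringNumber (h.trans_lt (ENat.natCast_lt_top k)).ne
  lift N to Finset X using hfin
  rw [← hcard, Set.encard_coe_eq_coe_finsetCard] at h
  refine ⟨N, hNA, by exact_mod_cast h, fun x hx => ?_⟩
  obtain ⟨y, hy, hxy⟩ := hcover hx
  exact ⟨y, hy, dist_le_coe.2 (edist_le_coe.1 hxy)⟩

section NormedSpace

variable (E : Type*) [NormedAddCommGroup E] [NormedSpace ℝ E] [FiniteDimensional ℝ E]

lemma packingNumber_closedBall_two_le :
    Metric.packingNumber 1 (Metric.closedBall (0 : E) 2) ≤ (5 ^ Module.finrank ℝ E : ℕ) := by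
  simp only [Metric.packingNumber, iSup_le_iff]
  intro C hC hsep
  by_contra! hcard
  obtain ⟨s, hs, hscard⟩ := Set.exists_subset_encard_eq (Order.add_one_le_of_lt hcard)
  lift s to Finset E using Set.finite_of_encard_eq_coe (k := 5 ^ Module.finrank ℝ E + 1) hscard
  rw [Set.encard_coe_eq_coe_finsetCard] at hscard
  norm_cast at hscard
  have hdist : ∀ x ∈ s, ∀ y ∈ s, x ≠ y → 1 ≤ ‖x - y‖ := fun x hx y hy hxy => by
    have : 1 < edist x y := by simpa using hsep (hs hx) (hs hy) hxy
    rw [edist_nndist, ENNReal.one_lt_coe_iff] at this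
    rw [← dist_eq_norm]
    exact_mod_cast this.le
  have := Besicovitch.card_le_of_separated s (fun x hx => by simpa using hC (hs hx)) hdist
  omega

lemma exists_finset_forall_norm_sub_le_half :
    ∃ N : Finset E, N.card ≤ 5 ^ Module.finrank ℝ E ∧
      ∀ x : E, ‖x‖ ≤ 1 → ∃ y ∈ N, ‖x - y‖ ≤ 1 / 2 := by
  classical
  obtain ⟨N, -, hcard, hN⟩ := exists_finset_of_coveringNumber_le
    ((Metric.coveringNumber_le_packingNumber _ _).trans (packingNumber_closedBall_two_le E))
  refine ⟨N.image fun y => (2⁻¹ : ℝ) • y, Finset.card_image_le.trans hcard, fun x hx => ?_⟩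
  obtain ⟨y, hy, hxy⟩ := hN ((2 : ℝ) • x) (by simp [norm_smul]; linarith)
  refine ⟨_, Finset.mem_image_of_mem _ hy, ?_⟩
  have hscale : x - (2⁻¹ : ℝ) • y = (2⁻¹ : ℝ) • ((2 : ℝ) • x - y) := by
    rw [smul_sub, smul_smul]; norm_num
  rw [dist_eq_norm, NNReal.coe_one] at hxy
  rw [hscale, norm_smul, Real.norm_of_nonneg (by norm_num)]
  linarith

lemma exists_finset_forall_norm_sub_le_half_pow (k : ℕ) :
    ∃ N : Finset E, N.card ≤ (5 ^ Module.finrank ℝ E) ^ k ∧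
      ∀ x : E, ‖x‖ ≤ 1 → ∃ y ∈ N, ‖x - y‖ ≤ 2⁻¹ ^ k := by
  classical
  obtain ⟨N₀, hcard₀, hN₀⟩ := exists_finset_forall_norm_sub_le_half E
  induction k with
  | zero => exact ⟨{0}, by simp, fun x hx => ⟨0, by simp, by simpa using hx⟩⟩
  | succ k ih =>
    obtain ⟨N, hcard, hN⟩ := ih
    refine ⟨(N ×ˢ N₀).image fun p => p.1 + (2⁻¹ ^ k : ℝ) • p.2, ?_, fun x hx => ?_⟩
    · rw [pow_succ]
      exact Finset.card_image_le.trans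
        ((Finset.card_product _ _).trans_le (Nat.mul_le_mul hcard hcard₀))
    · obtain ⟨y, hy, hxy⟩ := hN x hx
      have hscale : (2⁻¹ ^ k : ℝ) * 2 ^ k = 1 := by rw [← mul_pow]; norm_num
      obtain ⟨z, hz, hxyz⟩ := hN₀ ((2 : ℝ) ^ k • (x - y)) (by
        rw [norm_smul, norm_pow, Real.norm_ofNat, ← hscale, mul_comm]
        gcongr)
      refine ⟨_, Finset.mem_image_of_mem _ (Finset.mk_mem_product hy hz), ?_⟩
      calc ‖x - (y + (2⁻¹ ^ k : ℝ) • z)‖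
          = ‖(2⁻¹ ^ k : ℝ) • ((2 : ℝ) ^ k • (x - y) - z)‖ := by
            rw [smul_sub, smul_smul, hscale, one_smul, sub_add_eq_sub_sub]
        _ = 2⁻¹ ^ k * ‖(2 : ℝ) ^ k • (x - y) - z‖ := by
            rw [norm_smul, Real.norm_of_nonneg (by positivity)]
        _ ≤ 2⁻¹ ^ k * (1 / 2) := by gcongr
        _ = 2⁻¹ ^ (k + 1) := by ring

lemma coveringNumber_sphere_le (k : ℕ) :
    Metric.coveringNumber (2 * 2⁻¹ ^ k) (Metric.sphere (0 : E) 1) ≤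
      ((5 ^ Module.finrank ℝ E) ^ k : ℕ) := by
  obtain ⟨N, hcard, hN⟩ := exists_finset_forall_norm_sub_le_half_pow E k
  have hcover : Metric.IsCover (2⁻¹ ^ k) (Metric.sphere (0 : E) 1) N := fun x hx => by
    obtain ⟨y, hy, hxy⟩ := hN x (by simpa using (mem_sphere_zero_iff_norm.1 hx).le)
    exact ⟨y, hy, edist_le_coe.2 (dist_le_coe.1 (by simpa [dist_eq_norm] using hxy))⟩
  calc Metric.coveringNumber (2 * 2⁻¹ ^ k) (Metric.sphere (0 : E) 1)
      ≤ Metric.externalCoveringNumber (2⁻¹ ^ k) (Metric.sphere (0 : E) 1) :=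
        Metric.coveringNumber_two_mul_le_externalCoveringNumber _ _
    _ ≤ (N : Set E).encard := hcover.externalCoveringNumber_le_encard
    _ ≤ ((5 ^ Module.finrank ℝ E) ^ k : ℕ) := by
        rw [Set.encard_coe_eq_coe_finsetCard]; exact_mod_cast hcard

end NormedSpace

section Direction

variable {ι : Type*} [Fintype ι]

/-- The direction `x / |x|` of a vector, with `|x|` the Euclidean norm; it is `0` at `x = 0`. -/
noncomputable def direction (x : ι → ℝ) : ι → ℝ := (√(x ⬝ᵥ x))⁻¹ • x

lemma dotProduct_self_pos {x : ι → ℝ} (hx : x ≠ 0) : 0 < x ⬝ᵥ x :=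
  (dotProduct_self_nonneg x).lt_of_ne' (mt dotProduct_self_eq_zero.1 hx)

lemma direction_dotProduct_self {x : ι → ℝ} (hx : x ≠ 0) : direction x ⬝ᵥ direction x = 1 := by
  have hpos := dotProduct_self_pos hx
  rw [direction, smul_dotProduct, dotProduct_smul, smul_eq_mul, smul_eq_mul, ← mul_assoc,
    ← mul_inv, Real.mul_self_sqrt hpos.le, inv_mul_cancel₀ hpos.ne']

lemma sqrt_smul_direction {x : ι → ℝ} (hx : x ≠ 0) : √(x ⬝ᵥ x) • direction x = x :=
  smul_inv_smul₀ (Real.sqrt_ne_zero'.2 (dotProduct_self_pos hx)) x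

lemma sq_direction_dotProduct (x v : ι → ℝ) :
    (direction x ⬝ᵥ v) ^ 2 = (x ⬝ᵥ v) ^ 2 / (x ⬝ᵥ x) := by
  rw [direction, smul_dotProduct, smul_eq_mul, mul_pow, inv_pow,
    Real.sq_sqrt (dotProduct_self_nonneg x), inv_mul_eq_div]

lemma sq_direction_dotProduct_le (x v : ι → ℝ) : (direction x ⬝ᵥ v) ^ 2 ≤ v ⬝ᵥ v := by
  rw [sq_direction_dotProduct]
  exact div_le_of_le_mul₀ (dotProduct_self_nonneg x) (dotProduct_self_nonneg v)
    ((sq_dotProduct_le x v).trans_eq (mul_comm _ _))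

lemma forall_le_mul_dotProduct_self {f : (ι → ℝ) → ℝ} {t : ℝ}
    (hf : ∀ (a : ℝ) v, f (a • v) = a ^ 2 * f v)
    (h : ∀ v, v ⬝ᵥ v = 1 → f v ≤ t) (v : ι → ℝ) : f v ≤ t * (v ⬝ᵥ v) := by
  rcases eq_or_ne v 0 with rfl | hv
  · simpa using (hf 0 0).le
  · calc f v = v ⬝ᵥ v * f (direction v) := by
          conv_lhs => rw [← sqrt_smul_direction hv, hf, Real.sq_sqrt (dotProduct_self_nonneg v)]
      _ ≤ v ⬝ᵥ v * t := by
          gcongr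
          · exact dotProduct_self_nonneg v
          · exact h _ (direction_dotProduct_self hv)
      _ = t * (v ⬝ᵥ v) := mul_comm _ _

end Direction

/-- `IsSphereNet r N` says that `N` is a finite `r`-net of the Euclidean unit sphere consisting of
points of the sphere, with the Euclidean norm expressed through the dot product. -/
structure IsSphereNet {d : ℕ} (r : ℝ) (N : Finset (Fin d → ℝ)) : Prop where
  dotProduct_self {y : Fin d → ℝ} (hy : y ∈ N) : y ⬝ᵥ y = 1
  exists_sqrt_le {v : Fin d → ℝ} (hv : v ⬝ᵥ v = 1) : ∃ y ∈ N, √((v - y) ⬝ᵥ (v - y)) ≤ r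

lemma exists_isSphereNet (d k : ℕ) :
    ∃ N : Finset (Fin d → ℝ), N.card ≤ (5 ^ d) ^ k ∧ IsSphereNet (2 * 2⁻¹ ^ k) N := by
  classical
  obtain ⟨N, hsphere, hcard, hN⟩ := exists_finset_of_coveringNumber_le
    (coveringNumber_sphere_le (EuclideanSpace ℝ (Fin d)) k)
  rw [finrank_euclideanSpace_fin] at hcard
  refine ⟨N.image WithLp.ofLp, Finset.card_image_le.trans hcard, ?_, fun {v} hv => ?_⟩
  · simp only [Finset.mem_image]
    rintro _ ⟨x, hx, rfl⟩
    have := mem_sphere_zero_iff_norm.1 (hsphere hx)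
    rwa [← WithLp.toLp_ofLp 2 x, norm_toLp_eq_sqrt_dotProduct, Real.sqrt_eq_one] at this
  · obtain ⟨y, hy, hvy⟩ := hN (WithLp.toLp 2 v) (by
      rw [mem_sphere_zero_iff_norm, norm_toLp_eq_sqrt_dotProduct, hv, Real.sqrt_one])
    refine ⟨_, Finset.mem_image_of_mem _ hy, ?_⟩
    rw [← norm_toLp_eq_sqrt_dotProduct]
    simpa [dist_eq_norm] using hvy

lemma abs_dotProduct_mulVec_sub_le {ι : Type*} [Fintype ι] [DecidableEq ι] {A : Matrix ι ι ℝ}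
    (hA : A.IsHermitian) {v y : ι → ℝ} (hv : v ⬝ᵥ v = 1) (hy : y ⬝ᵥ y = 1) :
    |v ⬝ᵥ A *ᵥ v - y ⬝ᵥ A *ᵥ y| ≤ ‖A‖ * (√((v - y) ⬝ᵥ (v - y)) * 2) := by
  have hpolar : v ⬝ᵥ A *ᵥ v - y ⬝ᵥ A *ᵥ y = (v - y) ⬝ᵥ A *ᵥ (v + y) := by
    simp only [mulVec_add, dotProduct_add, sub_dotProduct]
    rw [dotProduct_mulVec_comm hA v y]; ring
  have hsum : √((v + y) ⬝ᵥ (v + y)) ≤ 2 := by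
    have hparallel : (v + y) ⬝ᵥ (v + y) + (v - y) ⬝ᵥ (v - y) = 2 * (v ⬝ᵥ v + y ⬝ᵥ y) := by
      simp only [dotProduct_add, add_dotProduct, sub_dotProduct, dotProduct_sub]; ring
    rw [Real.sqrt_le_left (by norm_num)]
    linarith [dotProduct_self_nonneg (v - y)]
  rw [hpolar]
  exact (abs_dotProduct_mulVec_le A _ _).trans (by gcongr)

lemma IsSphereNet.norm_le_two_mul {d : ℕ} {N : Finset (Fin d → ℝ)} (hN : IsSphereNet (1 / 4) N)
    {A : Matrix (Fin d) (Fin d) ℝ} (hA : A.IsHermitian) {t : ℝ} (ht : 0 ≤ t)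
    (h : ∀ y ∈ N, |y ⬝ᵥ A *ᵥ y| ≤ t) : ‖A‖ ≤ 2 * t := by
  have hunit : ∀ v : Fin d → ℝ, v ⬝ᵥ v = 1 → |v ⬝ᵥ A *ᵥ v| ≤ t + ‖A‖ / 2 := fun v hv => by
    obtain ⟨y, hy, hvy⟩ := hN.exists_sqrt_le hv
    have hdiff := abs_dotProduct_mulVec_sub_le hA hv (hN.dotProduct_self hy)
    have hle : ‖A‖ * (√((v - y) ⬝ᵥ (v - y)) * 2) ≤ ‖A‖ * (1 / 4 * 2) := by gcongr
    linarith [abs_sub_abs_le_abs_sub (v ⬝ᵥ A *ᵥ v) (y ⬝ᵥ A *ᵥ y), h y hy]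
  suffices ‖A‖ ≤ t + ‖A‖ / 2 by linarith
  refine l2_opNorm_le_of_abs_dotProduct_mulVec_le hA (by positivity)
    (forall_le_mul_dotProduct_self (fun a v => ?_) hunit)
  rw [mulVec_smul, dotProduct_smul, smul_dotProduct, smul_eq_mul, smul_eq_mul, ← mul_assoc, ← sq,
    abs_mul, abs_sq]

end Nets

section StandardGaussian

/-! ### The standard normal distribution -/

lemma gaussianPDFReal_mul_exp_sq (a x : ℝ) :
    gaussianPDFReal 0 1 x * Real.exp (a * x ^ 2) =
      (√(2 * Real.pi))⁻¹ * Real.exp (-(1 / 2 - a) * x ^ 2) := by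
  rw [gaussianPDFReal_def]
  simp only [NNReal.coe_one, mul_one, sub_zero]
  rw [mul_assoc, ← Real.exp_add]
  congr 2; ring

lemma integrable_exp_mul_sq_gaussianReal {a : ℝ} (ha : a < 1 / 2) :
    Integrable (fun x : ℝ => Real.exp (a * x ^ 2)) (gaussianReal 0 1) := by
  rw [gaussianReal_of_var_ne_zero 0 one_ne_zero,
    integrable_withDensity_iff_integrable_smul' (by fun_prop)
      (ae_of_all _ fun _ => gaussianPDF_lt_top)]
  simp only [toReal_gaussianPDF, smul_eq_mul, gaussianPDFReal_mul_exp_sq]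
  exact (integrable_exp_neg_mul_sq (by linarith)).const_mul _

lemma integral_exp_mul_sq_gaussianReal {a : ℝ} (ha : a < 1 / 2) :
    ∫ x : ℝ, Real.exp (a * x ^ 2) ∂(gaussianReal 0 1) = (√(1 - 2 * a))⁻¹ := by
  rw [integral_gaussianReal_eq_integral_smul one_ne_zero]
  simp only [smul_eq_mul, gaussianPDFReal_mul_exp_sq]
  rw [integral_const_mul, integral_gaussian, ← Real.sqrt_inv, ← Real.sqrt_inv,
    ← Real.sqrt_mul (by positivity)]
  congr 1
  have : 1 - 2 * a ≠ 0 := by linarith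
  have : 1 / 2 - a ≠ 0 := by linarith
  have := Real.pi_ne_zero
  field_simp

lemma integral_sq_gaussianReal : ∫ x, x ^ 2 ∂(gaussianReal 0 1) = 1 := by
  have := variance_fun_id_gaussianReal (μ := 0) (v := 1)
  rw [variance_of_integral_eq_zero (by fun_prop) (by simp)] at this
  simpa using this

lemma memLp_two_sq_gaussianReal : MemLp (fun x : ℝ => x ^ 2) 2 (gaussianReal 0 1) := by
  rw [memLp_two_iff_integrable_sq (by fun_prop)]
  have hid := (memLp_id_gaussianReal' (μ := 0) (v := 1) 4 (by simp)).integrable_norm_pow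
    (p := 4) (by norm_num)
  refine hid.congr (ae_of_all _ fun x => ?_)
  simp only [id_eq, Real.norm_eq_abs, ← pow_mul]
  exact (show Even 4 by decide).pow_abs x

lemma gaussianPDFReal_zero_one_le (x : ℝ) : gaussianPDFReal 0 1 x ≤ 1 / 2 := by
  rw [gaussianPDFReal_def]
  simp only [NNReal.coe_one, mul_one, sub_zero]
  have hexp : Real.exp (-x ^ 2 / 2) ≤ 1 := Real.exp_le_one_iff.2 (by linarith [sq_nonneg x])
  have hsqrt : (√(2 * Real.pi))⁻¹ ≤ 1 / 2 := by
    rw [inv_le_comm₀ (by positivity) (by norm_num), Real.le_sqrt (by norm_num) (by positivity)]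
    norm_num
    linarith [Real.pi_gt_three]
  calc (√(2 * Real.pi))⁻¹ * Real.exp (-x ^ 2 / 2) ≤ 1 / 2 * 1 := by gcongr
    _ = 1 / 2 := mul_one _

lemma gaussianReal_Ioo_le {a : ℝ} : gaussianReal 0 1 (Set.Ioo (-a) a) ≤ ENNReal.ofReal a := by
  rw [gaussianReal_apply _ one_ne_zero]
  calc ∫⁻ x in Set.Ioo (-a) a, gaussianPDF 0 1 x
      ≤ ∫⁻ _ in Set.Ioo (-a) a, ENNReal.ofReal (1 / 2) :=
        lintegral_mono fun x => ENNReal.ofReal_le_ofReal (gaussianPDFReal_zero_one_le x)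
    _ = ENNReal.ofReal (1 / 2) * ENNReal.ofReal (2 * a) := by
        rw [setLIntegral_const, Real.volume_Ioo]; congr 2; ring
    _ = ENNReal.ofReal a := by rw [← ENNReal.ofReal_mul (by norm_num)]; congr 1; ring

/-- The standard normal distribution `N_d(0, I)` on `Fin d → ℝ`, as a product measure; Mathlib's
`stdGaussian` is its image on the Euclidean space. -/
noncomputable abbrev stdGaussianPi (d : ℕ) : Measure (Fin d → ℝ) :=
  Measure.pi fun _ => gaussianReal 0 1

@[fun_prop]
lemma measurable_dotProduct_of_measurable {α ι : Type*} [MeasurableSpace α] [Fintype ι]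
    {f g : α → ι → ℝ} (hf : Measurable f) (hg : Measurable g) :
    Measurable fun x => f x ⬝ᵥ g x := by
  unfold dotProduct; fun_prop

variable {d : ℕ} {v w : Fin d → ℝ}

lemma measurePreserving_dotProduct (hv : v ⬝ᵥ v = 1) :
    MeasurePreserving (fun x => x ⬝ᵥ v) (stdGaussianPi d) (gaussianReal 0 1) := by
  refine ⟨by fun_prop, ?_⟩
  let L : StrongDual ℝ (EuclideanSpace ℝ (Fin d)) := innerSL ℝ (WithLp.toLp 2 v)
  have hL : ‖L‖ ^ 2 = 1 := by
    rw [innerSL_apply_norm, norm_toLp_eq_sqrt_dotProduct, hv, Real.sqrt_one, one_pow]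
  have hlaw := IsGaussian.map_eq_gaussianReal (μ := stdGaussian (EuclideanSpace ℝ (Fin d))) L
  rw [integral_strongDual_stdGaussian, variance_dual_stdGaussian, hL, ← map_pi_eq_stdGaussian,
    Measure.map_map (by fun_prop) (by fun_prop), Real.toNNReal_one] at hlaw
  rw [← hlaw]
  rfl

lemma integral_sq_dotProduct (hv : v ⬝ᵥ v = 1) : ∫ x, (x ⬝ᵥ v) ^ 2 ∂(stdGaussianPi d) = 1 := by
  have hlaw := measurePreserving_dotProduct hv
  rw [← integral_sq_gaussianReal, ← hlaw.map_eq,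
    integral_map hlaw.measurable.aemeasurable (by fun_prop)]

lemma integrable_exp_sq_dotProduct (hv : v ⬝ᵥ v = 1) :
    Integrable (fun x => Real.exp (1 / 4 * (x ⬝ᵥ v) ^ 2)) (stdGaussianPi d) :=
  (measurePreserving_dotProduct hv).integrable_comp_of_integrable
    (integrable_exp_mul_sq_gaussianReal (a := 1 / 4) (by norm_num))

lemma integral_exp_sq_dotProduct_le (hv : v ⬝ᵥ v = 1) :
    ∫ x, Real.exp (1 / 4 * (x ⬝ᵥ v) ^ 2) ∂(stdGaussianPi d) ≤ 2 := by
  have hlaw := measurePreserving_dotProduct hv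
  have hexp := integral_exp_mul_sq_gaussianReal (a := 1 / 4) (by norm_num)
  rw [← hlaw.map_eq, integral_map hlaw.measurable.aemeasurable (by fun_prop)] at hexp
  rw [hexp, ← Real.sqrt_inv, Real.sqrt_le_left (by norm_num)]
  norm_num

lemma ae_ne_zero_stdGaussianPi (hd : 0 < d) : ∀ᵐ x ∂(stdGaussianPi d), x ≠ 0 := by
  have hlaw := measurePreserving_eval (fun _ : Fin d => gaussianReal 0 1) ⟨0, hd⟩
  have := nullSingletonClass_gaussianReal (μ := 0) (v := 1) one_ne_zero
  filter_upwards [hlaw.quasiMeasurePreserving.ae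
    (show ∀ᵐ y ∂(gaussianReal 0 1), y ≠ 0 by simp [ae_iff])] with x hx h0
  exact hx (by rw [h0]; rfl)

lemma measureReal_abs_dotProduct_lt_le (hv : v ⬝ᵥ v = 1) {a : ℝ} (ha : 0 ≤ a) :
    (stdGaussianPi d).real {x | |x ⬝ᵥ v| < a} ≤ a := by
  have hset : {x | |x ⬝ᵥ v| < a} = (fun x => x ⬝ᵥ v) ⁻¹' Set.Ioo (-a) a := by
    ext x; simp [abs_lt]
  rw [hset, measureReal_def,
    (measurePreserving_dotProduct hv).measure_preimage measurableSet_Ioo.nullMeasurableSet]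
  exact ENNReal.toReal_le_of_le_ofReal ha gaussianReal_Ioo_le

/-! ### The squared length of a standard normal vector -/

lemma exp_sub_dotProduct_self_eq_prod (a : ℝ) (x : Fin d → ℝ) :
    Real.exp (a * d - x ⬝ᵥ x) = ∏ i, Real.exp a * Real.exp (-1 * x i ^ 2) := by
  simp only [← Real.exp_add, ← Real.exp_sum]
  congr 1
  simp [dotProduct, sq, mul_comm, Finset.sum_add_distrib, sub_eq_add_neg]

lemma exp_le_sqrt_three : Real.exp (21 / 40) ≤ √3 := by
  have hsmall := Real.exp_bound' (x := 1 / 20) (by norm_num) (by norm_num) (n := 2) (by norm_num)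
  norm_num [Finset.sum_range_succ] at hsmall
  refine Real.le_sqrt_of_sq_le ?_
  calc Real.exp (21 / 40) ^ 2 = Real.exp 1 * Real.exp (1 / 20) := by
        rw [← Real.exp_nat_mul, ← Real.exp_add]; norm_num
    _ ≤ 2.7182818286 * (421 / 400 + 1 / 1000) := by
        gcongr
        · exact Real.exp_one_lt_d9.le
        · linarith
    _ ≤ 3 := by norm_num

lemma integrable_exp_sub_dotProduct_self (a : ℝ) :
    Integrable (fun x => Real.exp (a - x ⬝ᵥ x)) (stdGaussianPi d) := by
  refine Integrable.of_bound (by fun_prop) (Real.exp a) (ae_of_all _ fun x => ?_)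
  rw [Real.norm_eq_abs, Real.abs_exp, Real.exp_le_exp]
  linarith [dotProduct_self_nonneg x]

lemma integral_exp_sub_dotProduct_self_le :
    ∫ x, Real.exp (21 / 40 * d - x ⬝ᵥ x) ∂(stdGaussianPi d) ≤ 1 := by
  simp only [exp_sub_dotProduct_self_eq_prod]
  rw [integral_fintype_prod_eq_prod
    (f := fun (_ : Fin d) x => Real.exp (21 / 40) * Real.exp (-1 * x ^ 2))]
  refine Finset.prod_le_one (fun _ _ => integral_nonneg fun x => by positivity) fun _ _ => ?_
  rw [integral_const_mul, integral_exp_mul_sq_gaussianReal (by norm_num), ← div_eq_mul_inv,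
    div_le_one (by norm_num)]
  exact exp_le_sqrt_three.trans_eq (by norm_num)

lemma dotProduct_self_eq_sum_sq :
    (fun x : Fin d → ℝ => x ⬝ᵥ x) = ∑ i, fun x : Fin d → ℝ => x i ^ 2 := by
  ext x; simp [dotProduct, sq]

lemma memLp_two_dotProduct_self : MemLp (fun x => x ⬝ᵥ x) 2 (stdGaussianPi d) := by
  rw [dotProduct_self_eq_sum_sq]
  exact memLp_finsetSum' _ fun i _ =>
    memLp_two_sq_gaussianReal.comp_measurePreserving (measurePreserving_eval _ i)

lemma integral_dotProduct_self : ∫ x, x ⬝ᵥ x ∂(stdGaussianPi d) = d := by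
  have hcoord : ∀ i : Fin d, ∫ x, x i ^ 2 ∂(stdGaussianPi d) = 1 := fun i => by
    simpa using integral_sq_dotProduct (v := Pi.single i 1) (by simp)
  have hint : ∀ i : Fin d, Integrable (fun x => x i ^ 2) (stdGaussianPi d) := fun i =>
    (memLp_two_sq_gaussianReal.comp_measurePreserving
      (measurePreserving_eval _ i)).integrable (by norm_num)
  calc ∫ x, x ⬝ᵥ x ∂(stdGaussianPi d) = ∫ x, ∑ i, x i ^ 2 ∂(stdGaussianPi d) := by
        simp only [dotProduct, sq]
    _ = d := by
        rw [integral_finsetSum _ fun i _ => hint i]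
        simp [hcoord]

lemma integral_sq_dotProduct_self_sub :
    ∫ x, (x ⬝ᵥ x - d) ^ 2 ∂(stdGaussianPi d) = d * Var[fun x => x ^ 2; gaussianReal 0 1] := by
  have hvar := variance_sum_pi (μ := fun _ : Fin d => gaussianReal 0 1) (X := fun _ x => x ^ 2)
    fun _ => memLp_two_sq_gaussianReal
  rw [← dotProduct_self_eq_sum_sq, variance_eq_integral (by fun_prop),
    integral_dotProduct_self] at hvar
  simpa using hvar

lemma measureReal_le_dotProduct_self_le (hd : 0 < d) :
    (stdGaussianPi d).real {x | 8 * (d : ℝ) ≤ x ⬝ᵥ x} ≤ 1 / 8 := by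
  have hmarkov := mul_meas_ge_le_integral_of_nonneg (μ := stdGaussianPi d)
    (ae_of_all _ dotProduct_self_nonneg)
    (memLp_two_dotProduct_self.integrable (by norm_num)) (8 * (d : ℝ))
  rw [integral_dotProduct_self] at hmarkov
  have hd' : (0 : ℝ) < d := by positivity
  rw [le_div_iff₀ (by norm_num)]
  exact le_of_mul_le_mul_left (by linarith) hd'

end StandardGaussian

section Concentration

/-! ### Concentration of sums of subexponential variables -/

variable {E : Type*} [MeasurableSpace E] {μ : Measure E}

/-- `IsCenteredSubexp b f μ` says that `f` is a centered subexponential random variable on the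
probability space `(E, μ)`, with rate `b`: the exponential moment of order `b` of `|f|` is at most
`4`, a bound which all applications meet. -/
structure IsCenteredSubexp (b : ℝ) (f : E → ℝ) (μ : Measure E) : Prop where
  measurable : Measurable f
  integrable_exp : Integrable (fun x => Real.exp (b * |f x|)) μ
  integral_exp_le : ∫ x, Real.exp (b * |f x|) ∂μ ≤ 4
  integral_eq_zero : ∫ x, f x ∂μ = 0

lemma exp_le_one_add_add_sq_mul_exp_abs (x : ℝ) :
    Real.exp x ≤ 1 + x + x ^ 2 * Real.exp |x| := by
  have h := Complex.norm_exp_sub_sum_le_norm_mul_exp (x : ℂ) 2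
  simp only [Finset.sum_range_succ, Finset.range_one, Finset.sum_singleton, pow_zero,
    Nat.factorial_zero, Nat.cast_one, div_one, pow_one, Nat.factorial_one, Complex.norm_real,
    Real.norm_eq_abs, sq_abs] at h
  rw [show Complex.exp x - (1 + x) = ((Real.exp x - (1 + x) : ℝ) : ℂ) by push_cast; rfl,
    Complex.norm_real, Real.norm_eq_abs] at h
  linarith [le_abs_self (Real.exp x - (1 + x))]

lemma exp_mul_le_one_add_add_mul_exp {b l : ℝ} (hb : 0 < b) (hl : |l| ≤ b / 2) (x : ℝ) :
    Real.exp (l * x) ≤ 1 + l * x + 8 * (l / b) ^ 2 * Real.exp (b * |x|) := by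
  have hsq : (l * x) ^ 2 ≤ 8 * (l / b) ^ 2 * Real.exp (b / 2 * |x|) := by
    have hquad := Real.quadratic_le_exp_of_nonneg (x := b / 2 * |x|) (by positivity)
    calc (l * x) ^ 2 = 8 * (l / b) ^ 2 * ((b / 2 * |x|) ^ 2 / 2) := by
          rw [mul_pow, mul_pow, sq_abs]; field_simp; norm_num
      _ ≤ 8 * (l / b) ^ 2 * Real.exp (b / 2 * |x|) := by
          gcongr
          have : 0 ≤ b / 2 * |x| := by positivity
          linarith
  have hexp : Real.exp |l * x| ≤ Real.exp (b / 2 * |x|) := by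
    rw [abs_mul]; gcongr
  calc Real.exp (l * x) ≤ 1 + l * x + (l * x) ^ 2 * Real.exp |l * x| :=
        exp_le_one_add_add_sq_mul_exp_abs _
    _ ≤ 1 + l * x + 8 * (l / b) ^ 2 * Real.exp (b / 2 * |x|) * Real.exp (b / 2 * |x|) := by gcongr
    _ = 1 + l * x + 8 * (l / b) ^ 2 * Real.exp (b * |x|) := by
        rw [mul_assoc, ← Real.exp_add]; ring_nf

namespace IsCenteredSubexp

variable {b l : ℝ} {f : E → ℝ}

lemma neg (hf : IsCenteredSubexp b f μ) : IsCenteredSubexp b (fun x => -f x) μ where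
  measurable := hf.measurable.neg
  integrable_exp := by simpa using hf.integrable_exp
  integral_exp_le := by simpa using hf.integral_exp_le
  integral_eq_zero := by rw [integral_neg, hf.integral_eq_zero, neg_zero]

lemma integrable (hf : IsCenteredSubexp b f μ) (hb : 0 < b) : Integrable f μ := by
  refine (hf.integrable_exp.const_mul b⁻¹).mono' hf.measurable.aestronglyMeasurable
    (ae_of_all _ fun x => ?_)
  rw [Real.norm_eq_abs, ← div_eq_inv_mul, le_div_iff₀ hb]
  linarith [Real.add_one_le_exp (b * |f x|)]

lemma integrable_exp_mul (hf : IsCenteredSubexp b f μ) (hl : |l| ≤ b) :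
    Integrable (fun x => Real.exp (l * f x)) μ := by
  have := hf.measurable
  refine hf.integrable_exp.mono' (by fun_prop) (ae_of_all _ fun x => ?_)
  rw [Real.norm_eq_abs, Real.abs_exp, Real.exp_le_exp]
  calc l * f x ≤ |l| * |f x| := by rw [← abs_mul]; exact le_abs_self _
    _ ≤ b * |f x| := by gcongr

lemma mgf_le [IsProbabilityMeasure μ] (hf : IsCenteredSubexp b f μ) (hb : 0 < b)
    (hl : |l| ≤ b / 2) : mgf f μ l ≤ Real.exp (32 * (l / b) ^ 2) := by
  have hlin : Integrable (fun x => 1 + l * f x) μ :=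
    (integrable_const 1).add ((hf.integrable hb).const_mul l)
  have hexp := hf.integrable_exp.const_mul (8 * (l / b) ^ 2)
  calc mgf f μ l
      ≤ ∫ x, ((1 + l * f x) + 8 * (l / b) ^ 2 * Real.exp (b * |f x|)) ∂μ :=
        integral_mono (hf.integrable_exp_mul (by linarith)) (hlin.add hexp)
          fun x => exp_mul_le_one_add_add_mul_exp hb hl (f x)
    _ = 1 + 8 * (l / b) ^ 2 * ∫ x, Real.exp (b * |f x|) ∂μ := by
        rw [integral_add hlin hexp,
          integral_add (integrable_const _) ((hf.integrable hb).const_mul l),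
          integral_const_mul, integral_const_mul, hf.integral_eq_zero]
        simp
    _ ≤ 1 + 8 * (l / b) ^ 2 * 4 := by gcongr; exact hf.integral_exp_le
    _ ≤ Real.exp (32 * (l / b) ^ 2) := by linarith [Real.add_one_le_exp (32 * (l / b) ^ 2)]

end IsCenteredSubexp

variable {Ω : Type*} [MeasurableSpace Ω] {P : Measure Ω} {n : ℕ} {X : Fin n → Ω → E}

/-- `IsIIDSample X μ P` says that `X 0, …, X (n - 1)` are independent random variables on `(Ω, P)`
with common law `μ`. -/
structure IsIIDSample (X : Fin n → Ω → E) (μ : Measure E) (P : Measure Ω) : Prop where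
  measurable (j : Fin n) : Measurable (X j)
  iIndepFun : ProbabilityTheory.iIndepFun X P
  map_eq (j : Fin n) : P.map (X j) = μ

namespace IsIIDSample

variable {b t : ℝ} {f : E → ℝ}

lemma measurePreserving (hX : IsIIDSample X μ P) (j : Fin n) : MeasurePreserving (X j) P μ :=
  ⟨hX.measurable j, hX.map_eq j⟩

lemma integral_comp (hX : IsIIDSample X μ P) (j : Fin n) (hf : AEStronglyMeasurable f μ) :
    ∫ ω, f (X j ω) ∂P = ∫ x, f x ∂μ := by
  rw [← hX.map_eq j] at hf ⊢
  exact (integral_map (hX.measurable j).aemeasurable hf).symm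

lemma mgf_sum_le [IsProbabilityMeasure μ] (hX : IsIIDSample X μ P) (hf : IsCenteredSubexp b f μ)
    (hb : 0 < b) {l : ℝ} (hl : |l| ≤ b / 2) :
    mgf (∑ j, f ∘ X j) P l ≤ Real.exp (n * (32 * (l / b) ^ 2)) := by
  have := hf.measurable
  have hmgf : ∀ j, mgf (f ∘ X j) P l ≤ Real.exp (32 * (l / b) ^ 2) := fun j =>
    (hX.integral_comp j (f := fun x => Real.exp (l * f x)) (by fun_prop)).trans_le
      (hf.mgf_le hb hl)
  rw [(hX.iIndepFun.comp (fun _ => f) fun _ => hf.measurable).mgf_sum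
    fun j => hf.measurable.comp (hX.measurable j)]
  refine (Finset.prod_le_prod (fun j _ => mgf_nonneg) fun j _ => hmgf j).trans_eq ?_
  simp [← Real.exp_nat_mul]

variable [IsProbabilityMeasure P]

-- Chernoff's bound at `l = b² t / 64`, which minimizes the exponent `32 (l / b)² - l t`.
lemma measureReal_le_sum_le [IsProbabilityMeasure μ] (hX : IsIIDSample X μ P)
    (hf : IsCenteredSubexp b f μ) (hb : 0 < b) (ht : 0 ≤ t) (htb : t ≤ 32 / b) :
    P.real {ω | n * t ≤ ∑ j, f (X j ω)} ≤ Real.exp (-(n * (b * t) ^ 2) / 128) := by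
  set l := b ^ 2 * t / 64 with hl
  have hlb : |l| ≤ b / 2 := by
    rw [abs_of_nonneg (by positivity), hl]
    have := (le_div_iff₀ hb).1 htb
    nlinarith
  have hint : Integrable (fun ω => Real.exp (l * (∑ j, f ∘ X j) ω)) P :=
    (hX.iIndepFun.comp (fun _ => f) fun _ => hf.measurable).integrable_exp_mul_sum
      (fun j => hf.measurable.comp (hX.measurable j)) fun j _ =>
        (hX.measurePreserving j).integrable_comp_of_integrable
          (hf.integrable_exp_mul (by linarith))
  have hchernoff := measure_ge_le_exp_mul_mgf (n * t) (show 0 ≤ l by positivity) hint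
  simp only [Finset.sum_apply, Function.comp_apply] at hchernoff
  calc P.real {ω | n * t ≤ ∑ j, f (X j ω)}
      ≤ Real.exp (-l * (n * t)) * Real.exp (n * (32 * (l / b) ^ 2)) :=
        hchernoff.trans (by gcongr; exact hX.mgf_sum_le hf hb hlb)
    _ = Real.exp (-(n * (b * t) ^ 2) / 128) := by
        rw [← Real.exp_add, hl]; congr 1; field_simp; ring

lemma measureReal_le_abs_sum_le [IsProbabilityMeasure μ] (hX : IsIIDSample X μ P)
    (hf : IsCenteredSubexp b f μ) (hb : 0 < b) (ht : 0 ≤ t) (htb : t ≤ 32 / b) :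
    P.real {ω | n * t ≤ |∑ j, f (X j ω)|} ≤ 2 * Real.exp (-(n * (b * t) ^ 2) / 128) := by
  have hsplit : {ω | n * t ≤ |∑ j, f (X j ω)|} =
      {ω | n * t ≤ ∑ j, f (X j ω)} ∪ {ω | n * t ≤ ∑ j, -f (X j ω)} := by
    ext ω; simp [le_abs]
  rw [hsplit, two_mul]
  exact (measureReal_union_le _ _).trans (add_le_add (hX.measureReal_le_sum_le hf hb ht htb)
    (hX.measureReal_le_sum_le hf.neg hb ht htb))

end IsIIDSample

end Concentration

section DirectionMoments

/-! ### Moments of the direction of a standard normal vector -/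

variable {d : ℕ} {v w : Fin d → ℝ}

@[fun_prop]
lemma measurable_direction : Measurable (direction : (Fin d → ℝ) → Fin d → ℝ) := by
  unfold direction; fun_prop

lemma abs_direction_apply_le (x : Fin d → ℝ) (i : Fin d) : |direction x i| ≤ 1 := by
  simpa using sq_direction_dotProduct_le x (Pi.single i 1)

lemma integrable_direction_mul (i j : Fin d) :
    Integrable (fun x => direction x i * direction x j) (stdGaussianPi d) := by
  refine Integrable.of_bound (by fun_prop) 1 (ae_of_all _ fun x => ?_)
  rw [Real.norm_eq_abs, abs_mul]
  exact mul_le_one₀ (abs_direction_apply_le x i) (abs_nonneg _) (abs_direction_apply_le x j)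

lemma integral_comp_of_measurePreserving_direction_mul {g : (Fin d → ℝ) → Fin d → ℝ}
    (hg : MeasurePreserving g (stdGaussianPi d) (stdGaussianPi d)) (i j : Fin d) :
    ∫ x, direction (g x) i * direction (g x) j ∂(stdGaussianPi d) =
      ∫ x, direction x i * direction x j ∂(stdGaussianPi d) := by
  conv_rhs => rw [← hg.map_eq]
  rw [integral_map hg.measurable.aemeasurable (by fun_prop)]

-- The law is invariant under changing the sign of the `i`-th coordinate.
lemma integral_direction_mul_of_ne {i j : Fin d} (hij : i ≠ j) :
    ∫ x, direction x i * direction x j ∂(stdGaussianPi d) = 0 := by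
  let flip (x : Fin d → ℝ) (k : Fin d) : ℝ := if k = i then -x k else x k
  have hflip : MeasurePreserving flip (stdGaussianPi d) (stdGaussianPi d) := by
    refine measurePreserving_pi (f := fun k y => if k = i then -y else y) _ _ fun k => ?_
    by_cases hk : k = i
    · simpa only [hk, if_true] using
        ⟨measurable_neg, by simpa using gaussianReal_map_neg (μ := 0) (v := 1)⟩
    · simp only [hk, if_false]
      exact MeasurePreserving.id _
  have hself : ∀ x, flip x ⬝ᵥ flip x = x ⬝ᵥ x := fun x =>
    Finset.sum_congr rfl fun k _ => by dsimp only [flip]; split_ifs <;> ring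
  have hodd : ∀ x, direction (flip x) i * direction (flip x) j =
      -(direction x i * direction x j) := fun x => by
    simp only [direction, Pi.smul_apply, smul_eq_mul, hself, flip, if_true, if_neg hij.symm]
    ring
  have h := integral_comp_of_measurePreserving_direction_mul hflip i j
  simp only [hodd] at h
  rw [integral_neg] at h
  linarith

lemma integral_direction_mul_self_eq (i j : Fin d) :
    ∫ x, direction x i * direction x i ∂(stdGaussianPi d) =
      ∫ x, direction x j * direction x j ∂(stdGaussianPi d) := by
  have hswap : MeasurePreserving (fun (x : Fin d → ℝ) k => x (Equiv.swap i j k))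
      (stdGaussianPi d) (stdGaussianPi d) :=
    measurePreserving_arrowCongr' (fun _ => gaussianReal 0 1) (fun _ => gaussianReal 0 1)
      (Equiv.swap i j) (MeasurableEquiv.refl ℝ) fun _ => MeasurePreserving.id _
  have hself : ∀ x : Fin d → ℝ, (fun k => x (Equiv.swap i j k)) ⬝ᵥ
      (fun k => x (Equiv.swap i j k)) = x ⬝ᵥ x := fun x =>
    Equiv.sum_comp (Equiv.swap i j) fun k => x k * x k
  have h := integral_comp_of_measurePreserving_direction_mul hswap i i
  simp only [direction, hself, Pi.smul_apply, Equiv.swap_apply_left] at h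
  exact h.symm

lemma integral_direction_mul_self (i : Fin d) :
    ∫ x, direction x i * direction x i ∂(stdGaussianPi d) = 1 / d := by
  have hd : 0 < d := i.pos
  have hsum : ∑ j : Fin d, ∫ x, direction x j * direction x j ∂(stdGaussianPi d) = 1 := by
    rw [← integral_finsetSum _ fun j _ => integrable_direction_mul j j]
    have hone : (fun x => ∑ j, direction x j * direction x j) =ᵐ[stdGaussianPi d] fun _ => 1 := by
      filter_upwards [ae_ne_zero_stdGaussianPi hd] with x hx
      exact direction_dotProduct_self hx
    rw [integral_congr_ae hone]; simp
  rw [Finset.sum_congr rfl fun j _ => integral_direction_mul_self_eq j i, Finset.sum_const,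
    Finset.card_univ, Fintype.card_fin, nsmul_eq_mul] at hsum
  rw [eq_div_iff (by positivity), mul_comm, hsum]

lemma direction_dotProduct_mul_direction_dotProduct (x v w : Fin d → ℝ) :
    (direction x ⬝ᵥ v) * (direction x ⬝ᵥ w) =
      ∑ i, ∑ j, v i * w j * (direction x i * direction x j) := by
  unfold dotProduct
  rw [Finset.sum_mul_sum]
  exact Finset.sum_congr rfl fun i _ => Finset.sum_congr rfl fun j _ => by ring

lemma integral_direction_dotProduct_mul (v w : Fin d → ℝ) :
    ∫ x, (direction x ⬝ᵥ v) * (direction x ⬝ᵥ w) ∂(stdGaussianPi d) = (v ⬝ᵥ w) / d := by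
  simp only [direction_dotProduct_mul_direction_dotProduct]
  have hint (i j : Fin d) := (integrable_direction_mul i j).const_mul (v i * w j)
  rw [integral_finsetSum _ fun i _ => integrable_finsetSum _ fun j _ => hint i j, dotProduct,
    Finset.sum_div]
  refine Finset.sum_congr rfl fun i _ => ?_
  rw [integral_finsetSum _ fun j _ => hint i j, Finset.sum_eq_single i]
  · rw [integral_const_mul, integral_direction_mul_self]; ring
  · intro j _ hj
    rw [integral_const_mul, integral_direction_mul_of_ne hj.symm, mul_zero]
  · simp

-- If `|x|² ≥ d / 10` the first term dominates, otherwise the second one does.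
lemma exp_sq_direction_dotProduct_le_add (hv : v ⬝ᵥ v = 1) (x : Fin d → ℝ) :
    Real.exp (1 / 40 * (d * (direction x ⬝ᵥ v) ^ 2)) ≤
      Real.exp (1 / 4 * (x ⬝ᵥ v) ^ 2) + Real.exp (21 / 40 * d - x ⬝ᵥ x) := by
  rcases lt_or_ge (x ⬝ᵥ x) (d / 10) with hx | hx
  · refine le_add_of_nonneg_of_le (by positivity) (Real.exp_le_exp.2 ?_)
    have : (d : ℝ) * (direction x ⬝ᵥ v) ^ 2 ≤ d * 1 := by
      gcongr; exact hv ▸ sq_direction_dotProduct_le x v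
    linarith
  · refine le_add_of_le_of_nonneg (Real.exp_le_exp.2 ?_) (by positivity)
    rw [sq_direction_dotProduct]
    rcases (dotProduct_self_nonneg x).eq_or_lt with h0 | h0
    · rw [← h0, div_zero, mul_zero, mul_zero]; positivity
    · rw [← mul_div_assoc, ← mul_div_assoc, div_le_iff₀ h0]
      linarith [mul_le_mul_of_nonneg_left hx (sq_nonneg (x ⬝ᵥ v))]

lemma integrable_exp_sq_direction_dotProduct (hv : v ⬝ᵥ v = 1) :
    Integrable (fun x => Real.exp (1 / 40 * (d * (direction x ⬝ᵥ v) ^ 2))) (stdGaussianPi d) := by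
  refine ((integrable_exp_sq_dotProduct hv).add
    (integrable_exp_sub_dotProduct_self (21 / 40 * d))).mono' (by fun_prop)
      (ae_of_all _ fun x => ?_)
  rw [Real.norm_eq_abs, Real.abs_exp]
  exact exp_sq_direction_dotProduct_le_add hv x

lemma integral_exp_sq_direction_dotProduct_le (hv : v ⬝ᵥ v = 1) :
    ∫ x, Real.exp (1 / 40 * (d * (direction x ⬝ᵥ v) ^ 2)) ∂(stdGaussianPi d) ≤ 3 := by
  have hint := integrable_exp_sq_dotProduct hv
  have hint' := integrable_exp_sub_dotProduct_self (d := d) (21 / 40 * d)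
  have hmono := integral_mono (integrable_exp_sq_direction_dotProduct hv) (hint.add hint')
    (exp_sq_direction_dotProduct_le_add hv)
  simp only [Pi.add_apply] at hmono
  rw [integral_add hint hint'] at hmono
  linarith [integral_exp_sq_dotProduct_le hv, integral_exp_sub_dotProduct_self_le (d := d)]

lemma integral_sq_sq_direction_dotProduct_sub_le (hd : 0 < d) (hv : v ⬝ᵥ v = 1) :
    ∫ x, ((direction x ⬝ᵥ v) ^ 2 - 1 / d) ^ 2 ∂(stdGaussianPi d) ≤ 20000 / (d : ℝ) ^ 2 := by
  have hd' : (0 : ℝ) < d := by positivity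
  have hle : ∀ x, ((direction x ⬝ᵥ v) ^ 2 - 1 / d) ^ 2 ≤
      6400 / (d : ℝ) ^ 2 * Real.exp (1 / 40 * (d * (direction x ⬝ᵥ v) ^ 2)) := fun x => by
    set s := (direction x ⬝ᵥ v) ^ 2
    have hquad := Real.quadratic_le_exp_of_nonneg (x := 1 / 40 * (d * s)) (by positivity)
    have : 0 ≤ d * s := by positivity
    rw [div_mul_eq_mul_div, le_div_iff₀ (by positivity), ← mul_pow, sub_mul,
      one_div_mul_cancel hd'.ne', mul_comm s]
    nlinarith
  have hint := (integrable_exp_sq_direction_dotProduct hv).const_mul (6400 / (d : ℝ) ^ 2)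
  calc ∫ x, ((direction x ⬝ᵥ v) ^ 2 - 1 / d) ^ 2 ∂(stdGaussianPi d)
      ≤ ∫ x, 6400 / (d : ℝ) ^ 2 * Real.exp (1 / 40 * (d * (direction x ⬝ᵥ v) ^ 2))
          ∂(stdGaussianPi d) :=
        integral_mono_of_nonneg (ae_of_all _ fun x => sq_nonneg _) hint (ae_of_all _ hle)
    _ ≤ 6400 / (d : ℝ) ^ 2 * 3 := by
        rw [integral_const_mul]; gcongr; exact integral_exp_sq_direction_dotProduct_le hv
    _ ≤ 20000 / (d : ℝ) ^ 2 := by rw [div_mul_eq_mul_div]; gcongr; norm_num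

/-! ### Subexponential functions of a standard normal vector -/

lemma exp_abs_sub_one_le {s : ℝ} (hs : 0 ≤ s) :
    Real.exp (1 / 40 * |s - 1|) ≤ 5 / 4 * Real.exp (1 / 40 * s) := by
  have hconst : Real.exp (1 / 40) ≤ 5 / 4 := by
    have h := Real.exp_bound' (x := 1 / 40) (by norm_num) (by norm_num) (n := 2) (by norm_num)
    norm_num [Finset.sum_range_succ] at h
    linarith
  calc Real.exp (1 / 40 * |s - 1|) ≤ Real.exp (1 / 40 + 1 / 40 * s) := by
        rw [Real.exp_le_exp]
        have : |s - 1| ≤ 1 + s := abs_le.2 ⟨by linarith, by linarith⟩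
        linarith
    _ ≤ 5 / 4 * Real.exp (1 / 40 * s) := by rw [Real.exp_add]; gcongr

lemma isCenteredSubexp_sub_one {E : Type*} [MeasurableSpace E] {μ : Measure E}
    [IsProbabilityMeasure μ] {g : E → ℝ} (hg : Measurable g) (h0 : ∀ x, 0 ≤ g x)
    (hint : Integrable (fun x => Real.exp (1 / 40 * g x)) μ)
    (hexp : ∫ x, Real.exp (1 / 40 * g x) ∂μ ≤ 3) (hone : ∫ x, g x ∂μ = 1) :
    IsCenteredSubexp (1 / 40) (fun x => g x - 1) μ := by
  have hI : Integrable (fun x => Real.exp (1 / 40 * |g x - 1|)) μ := by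
    refine (hint.const_mul (5 / 4)).mono' (by fun_prop) (ae_of_all _ fun x => ?_)
    rw [Real.norm_eq_abs, Real.abs_exp]
    exact exp_abs_sub_one_le (h0 x)
  refine ⟨hg.sub_const 1, hI, ?_, ?_⟩
  · have hmono := integral_mono hI (hint.const_mul (5 / 4)) fun x => exp_abs_sub_one_le (h0 x)
    rw [integral_const_mul] at hmono
    linarith
  · rw [integral_sub (Integrable.of_integral_ne_zero (by simp [hone])) (integrable_const _), hone]
    simp

lemma isCenteredSubexp_sq_direction_dotProduct (hd : 0 < d) (hv : v ⬝ᵥ v = 1) :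
    IsCenteredSubexp (1 / 40) (fun x => d * (direction x ⬝ᵥ v) ^ 2 - 1) (stdGaussianPi d) := by
  refine isCenteredSubexp_sub_one (by fun_prop) (fun x => by positivity)
    (integrable_exp_sq_direction_dotProduct hv) (integral_exp_sq_direction_dotProduct_le hv) ?_
  simp only [sq, integral_const_mul, integral_direction_dotProduct_mul, hv]
  field_simp

lemma isCenteredSubexp_sq_dotProduct (hv : v ⬝ᵥ v = 1) :
    IsCenteredSubexp (1 / 40) (fun x => 1 * (x ⬝ᵥ v) ^ 2 - 1) (stdGaussianPi d) := by
  simp only [one_mul]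
  have hle : ∀ x, Real.exp (1 / 40 * (x ⬝ᵥ v) ^ 2) ≤ Real.exp (1 / 4 * (x ⬝ᵥ v) ^ 2) := fun x => by
    gcongr; norm_num
  have hint : Integrable (fun x => Real.exp (1 / 40 * (x ⬝ᵥ v) ^ 2)) (stdGaussianPi d) := by
    refine (integrable_exp_sq_dotProduct hv).mono' (by fun_prop) (ae_of_all _ fun x => ?_)
    rw [Real.norm_eq_abs, Real.abs_exp]
    exact hle x
  refine isCenteredSubexp_sub_one (by fun_prop) (fun x => by positivity) hint ?_
    (integral_sq_dotProduct hv)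
  linarith [integral_mono hint (integrable_exp_sq_dotProduct hv) hle,
    integral_exp_sq_dotProduct_le hv]

lemma isCenteredSubexp_sub_integral {E : Type*} [MeasurableSpace E] {μ : Measure E}
    [IsProbabilityMeasure μ] {g : E → ℝ} (hg : Measurable g) (h0 : ∀ x, 0 ≤ g x)
    (h1 : ∀ x, g x ≤ 1) : IsCenteredSubexp 1 (fun x => g x - ∫ y, g y ∂μ) μ := by
  have hgint : Integrable g μ := Integrable.of_bound hg.aestronglyMeasurable 1
    (ae_of_all _ fun x => by rw [Real.norm_eq_abs, abs_of_nonneg (h0 x)]; exact h1 x)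
  have hmean0 : 0 ≤ ∫ y, g y ∂μ := integral_nonneg h0
  have hmean1 : ∫ y, g y ∂μ ≤ 1 := by
    simpa using integral_mono hgint (integrable_const 1) h1
  have hexp : ∀ x, Real.exp (1 * |g x - ∫ y, g y ∂μ|) ≤ 4 := fun x => by
    have habs : 1 * |g x - ∫ y, g y ∂μ| ≤ 1 := by
      rw [one_mul]
      exact abs_sub_le_of_nonneg_of_le (h0 x) (h1 x) hmean0 hmean1
    linarith [Real.exp_le_exp.2 habs, Real.exp_one_lt_d9]
  have hint : Integrable (fun x => Real.exp (1 * |g x - ∫ y, g y ∂μ|)) μ :=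
    Integrable.of_bound (by fun_prop) 4
      (ae_of_all _ fun x => by rw [Real.norm_eq_abs, Real.abs_exp]; exact hexp x)
  refine ⟨by fun_prop, hint, ?_, ?_⟩
  · simpa using integral_mono hint (integrable_const 4) hexp
  · rw [integral_sub hgint (integrable_const _)]; simp

end DirectionMoments

section UniformEvents

/-! ### Uniform bounds over the sphere -/

open scoped Matrix.Norms.L2Operator

variable {Ω E : Type*} [MeasurableSpace Ω] [MeasurableSpace E] {P : Measure Ω} {μ : Measure E}
  {d n : ℕ}

lemma five_pow_pow_le_exp (d k : ℕ) : ((5 : ℝ) ^ d) ^ k ≤ Real.exp (2 * k * d) := by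
  have h5 : (5 : ℝ) ≤ Real.exp 2 := by
    have h := Real.exp_one_gt_d9
    rw [← one_add_one_eq_two, Real.exp_add]
    nlinarith
  calc ((5 : ℝ) ^ d) ^ k ≤ (Real.exp 2 ^ d) ^ k := by gcongr
    _ = Real.exp (2 * k * d) := by
        rw [← Real.exp_nat_mul, ← Real.exp_nat_mul]; ring_nf

lemma dotProduct_scatter_const_sub_one_mulVec (s : ℝ) (u : Fin n → Fin d → ℝ) (v : Fin d → ℝ) :
    v ⬝ᵥ (scatter (fun _ => s) u - 1) *ᵥ v = s * ∑ j, (u j ⬝ᵥ v) ^ 2 - v ⬝ᵥ v := by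
  simp only [sub_mulVec, one_mulVec, dotProduct_sub, dotProduct_scatter_mulVec, ← sq,
    Finset.mul_sum]

lemma measureReal_biUnion_le_exp_mul {α : Type*} {N : Finset α} {F : α → Set Ω} {a b : ℝ}
    (hN : (N.card : ℝ) ≤ Real.exp a) (hF : ∀ y ∈ N, P.real (F y) ≤ 2 * Real.exp b) :
    P.real (⋃ y ∈ N, F y) ≤ 2 * Real.exp (a + b) :=
  calc P.real (⋃ y ∈ N, F y) ≤ ∑ y ∈ N, P.real (F y) := measureReal_biUnion_finset_le _ _
    _ ≤ N.card • (2 * Real.exp b) := Finset.sum_le_card_nsmul _ _ _ hF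
    _ ≤ Real.exp a * (2 * Real.exp b) := by rw [nsmul_eq_mul]; gcongr
    _ = 2 * Real.exp (a + b) := by rw [Real.exp_add]; ring

lemma IsSphereNet.norm_scatter_sub_one_le {N : Finset (Fin d → ℝ)} (hN : IsSphereNet (1 / 4) N)
    (hn : 0 < n) {κ t : ℝ} (ht : 0 ≤ t) {u : Fin n → Fin d → ℝ}
    (h : ∀ y ∈ N, |∑ j, (κ * (u j ⬝ᵥ y) ^ 2 - 1)| ≤ n * t) :
    ‖scatter (fun _ => κ / n) u - 1‖ ≤ 2 * t := by
  refine hN.norm_le_two_mul ((isHermitian_scatter _ _).sub isHermitian_one) ht fun y hy => ?_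
  have havg : κ / n * ∑ j, (u j ⬝ᵥ y) ^ 2 - 1 = (∑ j, (κ * (u j ⬝ᵥ y) ^ 2 - 1)) / n := by
    rw [Finset.sum_sub_distrib, ← Finset.mul_sum, Finset.sum_const, Finset.card_univ,
      Fintype.card_fin, nsmul_eq_mul]
    field_simp
  rw [dotProduct_scatter_const_sub_one_mulVec, hN.dotProduct_self hy, havg, abs_div, Nat.abs_cast,
    div_le_iff₀ (by positivity), mul_comm]
  exact h y hy

lemma IsIIDSample.measureReal_lt_norm_scatter_sub_one_le [IsProbabilityMeasure P]
    [IsProbabilityMeasure μ] {X : Fin n → Ω → E} (hX : IsIIDSample X μ P) (hn : 0 < n)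
    {Y : E → Fin d → ℝ} {κ b η : ℝ} (hb : 0 < b)
    (hY : ∀ v, v ⬝ᵥ v = 1 → IsCenteredSubexp b (fun x => κ * (Y x ⬝ᵥ v) ^ 2 - 1) μ)
    (hη : 0 ≤ η) (hη_le : η ≤ 1) (hη_sq : η ^ 2 * n = d) :
    P.real {ω | 64 / b * η < ‖scatter (fun _ => κ / n) (fun j => Y (X j ω)) - 1‖} ≤
      2 * Real.exp (-2 * d) := by
  obtain ⟨N, hNcard, hN⟩ := exists_isSphereNet d 3
  rw [show 2 * (2⁻¹ : ℝ) ^ 3 = 1 / 4 by norm_num] at hN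
  have hsub : {ω | 64 / b * η < ‖scatter (fun _ => κ / n) (fun j => Y (X j ω)) - 1‖} ⊆
      ⋃ y ∈ N, {ω | n * (32 / b * η) ≤ |∑ j, (κ * (Y (X j ω) ⬝ᵥ y) ^ 2 - 1)|} := by
    intro ω hω
    contrapose! hω
    simp only [Set.mem_iUnion, Set.mem_ofPred_eq, not_exists, not_le, not_lt] at hω ⊢
    calc ‖scatter (fun _ => κ / n) (fun j => Y (X j ω)) - 1‖ ≤ 2 * (32 / b * η) :=
          hN.norm_scatter_sub_one_le hn (by positivity) fun y hy => (hω y hy).le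
      _ = 64 / b * η := by ring
  have hbound (y) (hy : y ∈ N) :
      P.real {ω | n * (32 / b * η) ≤ |∑ j, (κ * (Y (X j ω) ⬝ᵥ y) ^ 2 - 1)|} ≤
        2 * Real.exp (-8 * d) := by
    refine (hX.measureReal_le_abs_sum_le (hY y (hN.dotProduct_self hy)) hb (by positivity)
      (mul_le_of_le_one_right (by positivity) hη_le)).trans_eq ?_
    rw [← hη_sq]
    field_simp
    ring_nf
  have hcard : (N.card : ℝ) ≤ Real.exp (6 * d) := by
    refine (Nat.cast_le.2 hNcard).trans ?_
    push_cast
    exact (five_pow_pow_le_exp d 3).trans_eq (by norm_num)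
  calc _ ≤ _ := measureReal_mono hsub (measure_ne_top _ _)
    _ ≤ 2 * Real.exp (6 * d + -8 * d) := measureReal_biUnion_le_exp_mul hcard hbound
    _ = 2 * Real.exp (-2 * d) := by ring_nf

/-- The product of `|√d ⟨u, v⟩|` and `|√d ⟨u, w⟩|`, each truncated at `1`. Being bounded, it
concentrates with exponential rate, unlike the quartic form `d² ⟨u, v⟩² ⟨u, w⟩²` above its square.
-/
noncomputable def truncatedProduct (v w u : Fin d → ℝ) : ℝ :=
  min (√d * |u ⬝ᵥ v|) 1 * min (√d * |u ⬝ᵥ w|) 1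

section TruncatedProduct

variable (v w u : Fin d → ℝ)

lemma truncatedProduct_nonneg : 0 ≤ truncatedProduct v w u := by
  unfold truncatedProduct; positivity

lemma truncatedProduct_le_one : truncatedProduct v w u ≤ 1 :=
  mul_le_one₀ (min_le_right _ _) (by positivity) (min_le_right _ _)

lemma measurable_truncatedProduct : Measurable (truncatedProduct v w) := by
  unfold truncatedProduct; fun_prop

lemma sq_truncatedProduct_le :
    truncatedProduct v w u ^ 2 ≤ (d : ℝ) ^ 2 * ((u ⬝ᵥ v) ^ 2 * (u ⬝ᵥ w) ^ 2) :=
  calc truncatedProduct v w u ^ 2 ≤ ((√d * |u ⬝ᵥ v|) * (√d * |u ⬝ᵥ w|)) ^ 2 := by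
        have := truncatedProduct_nonneg v w u
        gcongr
        exact mul_le_mul (min_le_left _ _) (min_le_left _ _) (by positivity) (by positivity)
    _ = (√d ^ 2) ^ 2 * (|u ⬝ᵥ v| ^ 2 * |u ⬝ᵥ w| ^ 2) := by ring
    _ = (d : ℝ) ^ 2 * ((u ⬝ᵥ v) ^ 2 * (u ⬝ᵥ w) ^ 2) := by
        rw [Real.sq_sqrt (by positivity), sq_abs, sq_abs]

lemma min_mul_abs_dotProduct_le (v' : Fin d → ℝ) :
    min (√d * |u ⬝ᵥ v'|) 1 ≤ min (√d * |u ⬝ᵥ v|) 1 + √d * |u ⬝ᵥ (v - v')| := by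
  have htri : |u ⬝ᵥ v'| ≤ |u ⬝ᵥ v| + |u ⬝ᵥ (v - v')| := by
    rw [dotProduct_sub]
    linarith [abs_sub_abs_le_abs_sub (u ⬝ᵥ v') (u ⬝ᵥ v), abs_sub_comm (u ⬝ᵥ v') (u ⬝ᵥ v)]
  rw [← min_add_add_right, ← mul_add]
  exact min_le_min (by gcongr) (le_add_of_nonneg_right (by positivity))

lemma truncatedProduct_le_add (v' w' : Fin d → ℝ) :
    truncatedProduct v' w' u ≤
      truncatedProduct v w u + √d * |u ⬝ᵥ (v - v')| + √d * |u ⬝ᵥ (w - w')| := by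
  have hv := min_mul_abs_dotProduct_le v u v'
  have hw := min_mul_abs_dotProduct_le w u w'
  unfold truncatedProduct
  have hv' : min (√d * |u ⬝ᵥ v'|) 1 ≤ 1 := min_le_right _ _
  have hw_le : min (√d * |u ⬝ᵥ w|) 1 ≤ 1 := min_le_right _ _
  calc min (√d * |u ⬝ᵥ v'|) 1 * min (√d * |u ⬝ᵥ w'|) 1
      ≤ min (√d * |u ⬝ᵥ v'|) 1 * (min (√d * |u ⬝ᵥ w|) 1 + √d * |u ⬝ᵥ (w - w')|) := by gcongr
    _ = min (√d * |u ⬝ᵥ v'|) 1 * min (√d * |u ⬝ᵥ w|) 1 +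
          min (√d * |u ⬝ᵥ v'|) 1 * (√d * |u ⬝ᵥ (w - w')|) := mul_add _ _ _
    _ ≤ (min (√d * |u ⬝ᵥ v|) 1 + √d * |u ⬝ᵥ (v - v')|) * min (√d * |u ⬝ᵥ w|) 1 +
          1 * (√d * |u ⬝ᵥ (w - w')|) := by gcongr
    _ ≤ min (√d * |u ⬝ᵥ v|) 1 * min (√d * |u ⬝ᵥ w|) 1 + √d * |u ⬝ᵥ (v - v')| +
          √d * |u ⬝ᵥ (w - w')| := by
        have := mul_le_of_le_one_right (show 0 ≤ √d * |u ⬝ᵥ (v - v')| by positivity) hw_le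
        linarith

end TruncatedProduct

lemma one_div_le_min_mul_abs_direction_dotProduct {x v : Fin d → ℝ} (hx : x ≠ 0)
    (hx_le : x ⬝ᵥ x ≤ 8 * d) (hxv : 1 / 8 ≤ |x ⬝ᵥ v|) :
    1 / 24 ≤ min (√d * |direction x ⬝ᵥ v|) 1 := by
  refine le_min (le_of_sq_le_sq ?_ (by positivity)) (by norm_num)
  have hsq : (1 / 8 : ℝ) ^ 2 ≤ |x ⬝ᵥ v| ^ 2 := by gcongr
  rw [mul_pow, sq_abs, Real.sq_sqrt (by positivity), sq_direction_dotProduct, ← sq_abs (x ⬝ᵥ v),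
    ← mul_div_assoc, le_div_iff₀ (dotProduct_self_pos hx)]
  nlinarith

lemma le_truncatedProduct_direction {x v w : Fin d → ℝ} (hx : x ≠ 0) (hx_le : x ⬝ᵥ x ≤ 8 * d)
    (hxv : 1 / 8 ≤ |x ⬝ᵥ v|) (hxw : 1 / 8 ≤ |x ⬝ᵥ w|) :
    1 / 576 ≤ truncatedProduct v w (direction x) := by
  have hv := one_div_le_min_mul_abs_direction_dotProduct hx hx_le hxv
  have hw := one_div_le_min_mul_abs_direction_dotProduct hx hx_le hxw
  calc (1 / 576 : ℝ) = 1 / 24 * (1 / 24) := by norm_num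
    _ ≤ truncatedProduct v w (direction x) := by unfold truncatedProduct; gcongr

lemma integrable_truncatedProduct_direction (v w : Fin d → ℝ) :
    Integrable (fun x => truncatedProduct v w (direction x)) (stdGaussianPi d) := by
  refine .of_bound
    ((measurable_truncatedProduct v w).comp measurable_direction).aestronglyMeasurable 1
    (ae_of_all _ fun x => ?_)
  rw [Real.norm_of_nonneg (truncatedProduct_nonneg _ _ _)]
  exact truncatedProduct_le_one _ _ _

lemma measureReal_small_or_large_le (hd : 0 < d) {v w : Fin d → ℝ} (hv : v ⬝ᵥ v = 1)
    (hw : w ⬝ᵥ w = 1) :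
    (stdGaussianPi d).real ({x | |x ⬝ᵥ v| < 1 / 8} ∪ {x | |x ⬝ᵥ w| < 1 / 8} ∪
      {x | 8 * (d : ℝ) ≤ x ⬝ᵥ x}) ≤ 3 / 8 := by
  calc _ ≤ _ := (measureReal_union_le _ _).trans
        (add_le_add_left (measureReal_union_le _ _) _)
    _ ≤ (1 / 8 + 1 / 8 + 1 / 8 : ℝ) := by
        gcongr
        · exact measureReal_abs_dotProduct_lt_le hv (by norm_num)
        · exact measureReal_abs_dotProduct_lt_le hw (by norm_num)
        · exact measureReal_le_dotProduct_self_le hd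
    _ = 3 / 8 := by norm_num

lemma le_integral_truncatedProduct_direction (hd : 0 < d) {v w : Fin d → ℝ} (hv : v ⬝ᵥ v = 1)
    (hw : w ⬝ᵥ w = 1) :
    1 / 1000 ≤ ∫ x, truncatedProduct v w (direction x) ∂(stdGaussianPi d) := by
  set bad := {x : Fin d → ℝ | |x ⬝ᵥ v| < 1 / 8} ∪ {x | |x ⬝ᵥ w| < 1 / 8} ∪
    {x | 8 * (d : ℝ) ≤ x ⬝ᵥ x} with hbad
  have hmeas : MeasurableSet bad :=
    ((measurableSet_lt (by fun_prop) (by fun_prop)).union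
      (measurableSet_lt (by fun_prop) (by fun_prop))).union
        (measurableSet_le (by fun_prop) (by fun_prop))
  have hprob : 5 / 8 ≤ (stdGaussianPi d).real badᶜ := by
    rw [probReal_compl_eq_one_sub hmeas]
    linarith [measureReal_small_or_large_le hd hv hw]
  calc (1 / 1000 : ℝ) ≤ (stdGaussianPi d).real badᶜ • (1 / 576) := by rw [smul_eq_mul]; linarith
    _ = ∫ x, badᶜ.indicator (fun _ => (1 / 576 : ℝ)) x ∂(stdGaussianPi d) :=
        (integral_indicator_const _ hmeas.compl).symm
    _ ≤ ∫ x, truncatedProduct v w (direction x) ∂(stdGaussianPi d) := by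
        refine integral_mono_ae ((integrable_const _).indicator hmeas.compl)
          (integrable_truncatedProduct_direction v w) ?_
        filter_upwards [ae_ne_zero_stdGaussianPi hd] with x hx
        exact Set.indicator_le_self' (fun _ _ => truncatedProduct_nonneg _ _ _) x |>.trans' <|
          Set.indicator_le_indicator' fun hmem => by
            simp only [hbad, Set.mem_compl_iff, Set.mem_union, Set.mem_ofPred_eq, not_or, not_lt,
              not_le] at hmem
            exact le_truncatedProduct_direction hx hmem.2.le hmem.1.1 hmem.1.2

lemma sum_sqrt_mul_abs_dotProduct_le (hn : 0 < n) {u : Fin n → Fin d → ℝ}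
    (hM : ‖scatter (fun _ => (d : ℝ) / n) u - 1‖ ≤ 1) (z : Fin d → ℝ) :
    ∑ j, √d * |u j ⬝ᵥ z| ≤ n * (2 * √(z ⬝ᵥ z)) := by
  have hquad : (d : ℝ) / n * ∑ j, (u j ⬝ᵥ z) ^ 2 ≤ 4 * (z ⬝ᵥ z) := by
    have h := (le_abs_self _).trans
      (abs_dotProduct_mulVec_self_le (scatter (fun _ => (d : ℝ) / n) u - 1) z)
    rw [dotProduct_scatter_const_sub_one_mulVec] at h
    nlinarith [dotProduct_self_nonneg z]
  refine le_of_sq_le_sq ?_ (by positivity)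
  calc (∑ j, √d * |u j ⬝ᵥ z|) ^ 2 ≤ n * ∑ j, (√d * |u j ⬝ᵥ z|) ^ 2 := by
        simpa using sq_sum_le_card_mul_sum_sq (s := Finset.univ) (f := fun j => √d * |u j ⬝ᵥ z|)
    _ = n ^ 2 * ((d : ℝ) / n * ∑ j, (u j ⬝ᵥ z) ^ 2) := by
        simp only [mul_pow, sq_abs, Real.sq_sqrt (Nat.cast_nonneg d), ← Finset.mul_sum]
        field_simp
    _ ≤ n ^ 2 * (4 * (z ⬝ᵥ z)) := by gcongr
    _ = (n * (2 * √(z ⬝ᵥ z))) ^ 2 := by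
        rw [mul_pow, mul_pow, Real.sq_sqrt (dotProduct_self_nonneg z)]; norm_num

lemma IsSphereNet.le_sum_truncatedProduct {r c : ℝ} {N : Finset (Fin d → ℝ)}
    (hN : IsSphereNet r N) (hn : 0 < n) {u : Fin n → Fin d → ℝ}
    (hM : ‖scatter (fun _ => (d : ℝ) / n) u - 1‖ ≤ 1)
    (h : ∀ y ∈ N, ∀ z ∈ N, n * (c + 4 * r) ≤ ∑ j, truncatedProduct y z (u j))
    {v w : Fin d → ℝ} (hv : v ⬝ᵥ v = 1) (hw : w ⬝ᵥ w = 1) :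
    n * c ≤ ∑ j, truncatedProduct v w (u j) := by
  obtain ⟨y, hy, hvy⟩ := hN.exists_sqrt_le hv
  obtain ⟨z, hz, hwz⟩ := hN.exists_sqrt_le hw
  have hlip : n * (c + 4 * r) ≤
      ∑ j, truncatedProduct v w (u j) + n * (2 * r) + n * (2 * r) :=
    calc n * (c + 4 * r) ≤ ∑ j, truncatedProduct y z (u j) := h y hy z hz
      _ ≤ ∑ j, (truncatedProduct v w (u j) + √d * |u j ⬝ᵥ (v - y)| + √d * |u j ⬝ᵥ (w - z)|) :=
          Finset.sum_le_sum fun j _ => truncatedProduct_le_add v w (u j) y z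
      _ = ∑ j, truncatedProduct v w (u j) + ∑ j, √d * |u j ⬝ᵥ (v - y)| +
            ∑ j, √d * |u j ⬝ᵥ (w - z)| := by
          rw [Finset.sum_add_distrib, Finset.sum_add_distrib]
      _ ≤ ∑ j, truncatedProduct v w (u j) + n * (2 * r) + n * (2 * r) := by
          gcongr
          · exact (sum_sqrt_mul_abs_dotProduct_le hn hM _).trans (by gcongr)
          · exact (sum_sqrt_mul_abs_dotProduct_le hn hM _).trans (by gcongr)
  linarith

lemma hasQuarticLowerBound_of_dotProduct_self_eq_one {c q : ℝ} {u : Fin n → Fin d → ℝ}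
    (h : ∀ v w, v ⬝ᵥ v = 1 → w ⬝ᵥ w = 1 →
      c ≤ q * ∑ j, (u j ⬝ᵥ v) ^ 2 * (u j ⬝ᵥ w) ^ 2) :
    HasQuarticLowerBound c q u := by
  intro v w
  rcases eq_or_ne v 0 with rfl | hv
  · simp
  rcases eq_or_ne w 0 with rfl | hw
  · simp
  have hscale {z : Fin d → ℝ} (hz : z ≠ 0) (j) :
      (u j ⬝ᵥ z) ^ 2 = (z ⬝ᵥ z) * (u j ⬝ᵥ direction z) ^ 2 := by
    have := dotProduct_self_pos hz
    rw [dotProduct_comm (u j) (direction z), sq_direction_dotProduct, dotProduct_comm (u j) z]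
    field_simp
  have hunit := h _ _ (direction_dotProduct_self hv) (direction_dotProduct_self hw)
  have := dotProduct_self_nonneg v
  have := dotProduct_self_nonneg w
  calc c * (v ⬝ᵥ v) * (w ⬝ᵥ w) = (v ⬝ᵥ v) * (w ⬝ᵥ w) * c := by ring
    _ ≤ (v ⬝ᵥ v) * (w ⬝ᵥ w) *
          (q * ∑ j, (u j ⬝ᵥ direction v) ^ 2 * (u j ⬝ᵥ direction w) ^ 2) := by gcongr
    _ = q * ∑ j, (u j ⬝ᵥ v) ^ 2 * (u j ⬝ᵥ w) ^ 2 := by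
        simp only [hscale hv, hscale hw, Finset.mul_sum]
        exact Finset.sum_congr rfl fun j _ => by ring

lemma IsSphereNet.hasQuarticLowerBound {r c : ℝ} {N : Finset (Fin d → ℝ)}
    (hN : IsSphereNet r N) (hn : 0 < n) (hc : 0 ≤ c) {u : Fin n → Fin d → ℝ}
    (hM : ‖scatter (fun _ => (d : ℝ) / n) u - 1‖ ≤ 1)
    (h : ∀ y ∈ N, ∀ z ∈ N, n * (c + 4 * r) ≤ ∑ j, truncatedProduct y z (u j)) :
    HasQuarticLowerBound (c ^ 2) ((d : ℝ) ^ 2 / n) u := by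
  refine hasQuarticLowerBound_of_dotProduct_self_eq_one fun v w hv hw => ?_
  rw [div_mul_eq_mul_div, le_div_iff₀ (by positivity)]
  refine le_of_mul_le_mul_left ?_ (show (0 : ℝ) < n by positivity)
  calc n * (c ^ 2 * n) = (n * c) ^ 2 := by ring
    _ ≤ (∑ j, truncatedProduct v w (u j)) ^ 2 := by
        gcongr; exact hN.le_sum_truncatedProduct hn hM h hv hw
    _ ≤ n * ∑ j, truncatedProduct v w (u j) ^ 2 := by
        simpa using
          sq_sum_le_card_mul_sum_sq (s := Finset.univ) (f := fun j => truncatedProduct v w (u j))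
    _ ≤ n * ∑ j, (d : ℝ) ^ 2 * ((u j ⬝ᵥ v) ^ 2 * (u j ⬝ᵥ w) ^ 2) := by
        gcongr; exact sq_truncatedProduct_le _ _ _
    _ = n * ((d : ℝ) ^ 2 * ∑ j, (u j ⬝ᵥ v) ^ 2 * (u j ⬝ᵥ w) ^ 2) := by rw [← Finset.mul_sum]

lemma le_sum_truncatedProduct_of_abs_sum_sub_lt (hd : 0 < d) {v w : Fin d → ℝ} (hv : v ⬝ᵥ v = 1)
    (hw : w ⬝ᵥ w = 1) {u : Fin n → Fin d → ℝ}
    (h : |∑ j, (truncatedProduct v w (u j) -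
      ∫ x, truncatedProduct v w (direction x) ∂(stdGaussianPi d))| < n * (1 / 2000)) :
    n * (1 / 2000) ≤ ∑ j, truncatedProduct v w (u j) := by
  have hlower := (abs_lt.1 h).1
  rw [Finset.sum_sub_distrib, Finset.sum_const, Finset.card_univ, Fintype.card_fin, nsmul_eq_mul]
    at hlower
  have hmean : (n : ℝ) * (1 / 1000) ≤
      n * ∫ x, truncatedProduct v w (direction x) ∂(stdGaussianPi d) := by
    gcongr
    exact le_integral_truncatedProduct_direction hd hv hw
  linarith

lemma IsIIDSample.measureReal_le_abs_sum_truncatedProduct_sub_integral_le [IsProbabilityMeasure P]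
    {X : Fin n → Ω → Fin d → ℝ} (hX : IsIIDSample X (stdGaussianPi d) P) (v w : Fin d → ℝ) :
    P.real {ω | n * (1 / 2000) ≤ |∑ j, (truncatedProduct v w (direction (X j ω)) -
      ∫ x, truncatedProduct v w (direction x) ∂(stdGaussianPi d))|} ≤
        2 * Real.exp (-(n / 10 ^ 9)) := by
  refine (hX.measureReal_le_abs_sum_le (isCenteredSubexp_sub_integral
    ((measurable_truncatedProduct v w).comp measurable_direction)
    (fun _ => truncatedProduct_nonneg _ _ _) fun _ => truncatedProduct_le_one _ _ _)
    one_pos (by norm_num) (by norm_num)).trans ?_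
  gcongr
  have : (0 : ℝ) ≤ n := by positivity
  linarith

lemma IsIIDSample.measureReal_not_hasQuarticLowerBound_le [IsProbabilityMeasure P]
    {X : Fin n → Ω → Fin d → ℝ} (hX : IsIIDSample X (stdGaussianPi d) P) (hn : 0 < n) (hd : 0 < d) :
    P.real {ω | ‖scatter (fun _ => (d : ℝ) / n) (fun j => direction (X j ω)) - 1‖ ≤ 1 ∧
      ¬ HasQuarticLowerBound ((1 / 4000) ^ 2) ((d : ℝ) ^ 2 / n) fun j => direction (X j ω)} ≤
        2 * Real.exp (60 * d - n / 10 ^ 9) := by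
  obtain ⟨N, hNcard, hN⟩ := exists_isSphereNet d 15
  set F : (Fin d → ℝ) × (Fin d → ℝ) → Set Ω := fun p => {ω | n * (1 / 2000) ≤
    |∑ j, (truncatedProduct p.1 p.2 (direction (X j ω)) -
      ∫ x, truncatedProduct p.1 p.2 (direction x) ∂(stdGaussianPi d))|}
  have hsub : {ω | ‖scatter (fun _ => (d : ℝ) / n) (fun j => direction (X j ω)) - 1‖ ≤ 1 ∧
      ¬ HasQuarticLowerBound ((1 / 4000) ^ 2) ((d : ℝ) ^ 2 / n) fun j => direction (X j ω)} ⊆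
        ⋃ p ∈ N ×ˢ N, F p := by
    rintro ω ⟨hM, hω⟩
    contrapose! hω
    simp only [Set.mem_iUnion, not_exists, F, Set.mem_ofPred_eq, not_le] at hω
    refine hN.hasQuarticLowerBound hn (by norm_num) hM fun y hy z hz => ?_
    refine le_trans ?_ (le_sum_truncatedProduct_of_abs_sum_sub_lt hd (hN.dotProduct_self hy)
      (hN.dotProduct_self hz) (hω (y, z) (Finset.mk_mem_product hy hz)))
    gcongr
    norm_num
  have hcard : ((N ×ˢ N).card : ℝ) ≤ Real.exp (60 * d) := by
    have h : (N.card : ℝ) ≤ Real.exp (2 * (15 : ℕ) * d) :=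
      le_trans (by exact_mod_cast hNcard) (five_pow_pow_le_exp d 15)
    have hsplit : (60 * d : ℝ) = 2 * (15 : ℕ) * d + 2 * (15 : ℕ) * d := by push_cast; ring
    rw [Finset.card_product, Nat.cast_mul, hsplit, Real.exp_add]
    gcongr
  refine (measureReal_mono hsub (measure_ne_top _ _)).trans ?_
  exact measureReal_biUnion_le_exp_mul hcard
    fun p _ => hX.measureReal_le_abs_sum_truncatedProduct_sub_integral_le p.1 p.2

end UniformEvents

section SecondMoments

/-! ### Second moment bounds -/

open scoped Matrix.Norms.L2Operator

variable {Ω E F : Type*} [MeasurableSpace Ω] [MeasurableSpace E] [MeasurableSpace F]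
  {P : Measure Ω} {μ : Measure E} {n d : ℕ}

lemma measureReal_mul_le_le_div {Z : Ω → ℝ} (hZ_nonneg : 0 ≤ Z) (hZ : Integrable Z P)
    {a b δ : ℝ} (ha : 0 < a) (hδ : 0 < δ) (h : ∫ ω, Z ω ∂P ≤ a * b) :
    P.real {ω | δ * a ≤ Z ω} ≤ b / δ := by
  have hmarkov := (mul_meas_ge_le_integral_of_nonneg (ae_of_all _ hZ_nonneg) hZ (δ * a)).trans h
  rw [le_div_iff₀ hδ]
  refine le_of_mul_le_mul_left (le_of_eq_of_le ?_ hmarkov) ha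
  ring

lemma integral_comp_prodMk_of_indepFun [IsProbabilityMeasure P] {Z : Ω → F} {Y : Ω → E}
    (hZ : Measurable Z) (hY : Measurable Y) (h : IndepFun Z Y P) {g : F × E → ℝ}
    (hg : Measurable g) (hg_le : ∀ p, |g p| ≤ 1) :
    ∫ ω, g (Z ω, Y ω) ∂P = ∫ ω, ∫ x, g (Z ω, x) ∂(P.map Y) ∂P := by
  have := Measure.isProbabilityMeasure_map (μ := P) hZ.aemeasurable
  have := Measure.isProbabilityMeasure_map (μ := P) hY.aemeasurable
  have hint : Integrable g ((P.map Z).prod (P.map Y)) :=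
    .of_bound hg.aestronglyMeasurable 1 (ae_of_all _ hg_le)
  rw [← integral_map (hZ.prodMk hY).aemeasurable hg.aestronglyMeasurable,
    (indepFun_iff_map_prod_eq_prod_map_map hZ.aemeasurable hY.aemeasurable).1 h,
    integral_prod _ hint,
    integral_map hZ.aemeasurable hint.integral_prod_left.aestronglyMeasurable]

/-- A kernel `h` on a probability space `(E, μ)`, bounded by `1`, all of whose sections `h y` have
mean zero and second moment at most `s`. -/
structure IsCenteredKernel (s : ℝ) (h : E → E → ℝ) (μ : Measure E) : Prop where
  measurable : Measurable (Function.uncurry h)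
  abs_le_one (y x : E) : |h y x| ≤ 1
  integral_eq_zero (y : E) : ∫ x, h y x ∂μ = 0
  integral_sq_le (y : E) : ∫ x, h y x ^ 2 ∂μ ≤ s

namespace IsIIDSample

variable {X : Fin n → Ω → E} {f : E → ℝ} {s : ℝ} {h : E → E → ℝ}

lemma integrable_sq_sum (hX : IsIIDSample X μ P) (hf : MemLp f 2 μ) :
    Integrable (fun ω => (∑ j, f (X j ω)) ^ 2) P :=
  (memLp_finsetSum _ fun j _ => hf.comp_measurePreserving (hX.measurePreserving j)).integrable_sq

variable [IsProbabilityMeasure P]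

lemma integrable_kernel_mul_kernel (hX : IsIIDSample X μ P) (hh : IsCenteredKernel s h μ)
    (j k l : Fin n) : Integrable (fun ω => h (X j ω) (X k ω) * h (X j ω) (X l ω)) P := by
  have hmeas (k : Fin n) : Measurable fun ω => h (X j ω) (X k ω) :=
    hh.measurable.comp ((hX.measurable j).prodMk (hX.measurable k))
  refine .of_bound ((hmeas k).mul (hmeas l)).aestronglyMeasurable 1 (ae_of_all _ fun ω => ?_)
  rw [Real.norm_eq_abs, abs_mul]
  exact mul_le_one₀ (hh.abs_le_one _ _) (abs_nonneg _) (hh.abs_le_one _ _)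

lemma integral_kernel_mul_kernel (hX : IsIIDSample X μ P) (hh : IsCenteredKernel s h μ)
    {j k l : Fin n} (hkj : k ≠ j) (hkl : k ≠ l) :
    ∫ ω, h (X j ω) (X k ω) * h (X j ω) (X l ω) ∂P = 0 := by
  let g (p : (E × E) × E) : ℝ := h p.1.1 p.2 * h p.1.1 p.1.2
  have hg : Measurable g :=
    (hh.measurable.comp (measurable_fst.fst.prodMk measurable_snd)).mul
      (hh.measurable.comp measurable_fst)
  have hg_le (p : (E × E) × E) : |g p| ≤ 1 := by
    rw [abs_mul]
    exact mul_le_one₀ (hh.abs_le_one _ _) (abs_nonneg _) (hh.abs_le_one _ _)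
  have hindep := hX.iIndepFun.indepFun_prodMk hX.measurable j l k hkj.symm hkl.symm
  refine (integral_comp_prodMk_of_indepFun ((hX.measurable j).prodMk (hX.measurable l))
    (hX.measurable k) hindep hg hg_le).trans ?_
  simp only [g, integral_mul_const, hX.map_eq, hh.integral_eq_zero, zero_mul, integral_zero]

lemma integral_sq_kernel_le (hX : IsIIDSample X μ P) (hh : IsCenteredKernel s h μ)
    {j k : Fin n} (hkj : k ≠ j) : ∫ ω, h (X j ω) (X k ω) ^ 2 ∂P ≤ s := by
  calc ∫ ω, h (X j ω) (X k ω) ^ 2 ∂P = ∫ ω, ∫ x, h (X j ω) x ^ 2 ∂(P.map (X k)) ∂P :=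
        integral_comp_prodMk_of_indepFun (g := fun p => h p.1 p.2 ^ 2) (hX.measurable j)
          (hX.measurable k) (hX.iIndepFun.indepFun hkj.symm) (hh.measurable.pow_const 2)
          fun p => by rw [abs_pow]; exact pow_le_one₀ (abs_nonneg _) (hh.abs_le_one _ _)
    _ ≤ ∫ _, s ∂P := by
        rw [hX.map_eq]
        exact integral_mono_of_nonneg (ae_of_all _ fun ω => integral_nonneg fun x => sq_nonneg _)
          (integrable_const s) (ae_of_all _ fun ω => hh.integral_sq_le _)
    _ = s := by simp

lemma integrable_sq_sum_kernel (hX : IsIIDSample X μ P) (hh : IsCenteredKernel s h μ)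
    (j : Fin n) : Integrable (fun ω => (∑ k, h (X j ω) (X k ω)) ^ 2) P := by
  simp only [sq, Finset.sum_mul_sum]
  exact integrable_finsetSum _ fun k _ => integrable_finsetSum _ fun l _ =>
    hX.integrable_kernel_mul_kernel hh j k l

lemma integral_sq_sum_kernel (hX : IsIIDSample X μ P) (hh : IsCenteredKernel s h μ) (j : Fin n) :
    ∫ ω, (∑ k, h (X j ω) (X k ω)) ^ 2 ∂P = ∑ k, ∫ ω, h (X j ω) (X k ω) ^ 2 ∂P := by
  have hint := hX.integrable_kernel_mul_kernel hh j
  simp only [sq, Finset.sum_mul_sum]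
  rw [integral_finsetSum _ fun k _ => integrable_finsetSum _ fun l _ => hint k l]
  refine Finset.sum_congr rfl fun k _ => ?_
  rw [integral_finsetSum _ fun l _ => hint k l]
  refine Finset.sum_eq_single_of_mem k (Finset.mem_univ k) fun l _ hlk => ?_
  rcases eq_or_ne k j with rfl | hkj
  · simp only [mul_comm (h (X k _) (X k _))]
    exact hX.integral_kernel_mul_kernel hh hlk hlk
  · exact hX.integral_kernel_mul_kernel hh hkj hlk.symm

lemma integral_sq_sum_kernel_le (hX : IsIIDSample X μ P) (hh : IsCenteredKernel s h μ)
    (j : Fin n) : ∫ ω, (∑ k, h (X j ω) (X k ω)) ^ 2 ∂P ≤ 1 + n * s := by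
  have hs : 0 ≤ s := by
    obtain ⟨ω⟩ := nonempty_of_isProbabilityMeasure P
    exact (integral_nonneg fun x => sq_nonneg _).trans (hh.integral_sq_le (X j ω))
  have hterm (k : Fin n) :
      ∫ ω, h (X j ω) (X k ω) ^ 2 ∂P ≤ (if k = j then 1 else 0) + s := by
    split_ifs with hkj
    · calc ∫ ω, h (X j ω) (X k ω) ^ 2 ∂P ≤ ∫ _, (1 : ℝ) ∂P :=
            integral_mono_of_nonneg (ae_of_all _ fun ω => sq_nonneg _) (integrable_const 1)
              (ae_of_all _ fun ω => (sq_le_one_iff_abs_le_one _).2 (hh.abs_le_one _ _))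
        _ ≤ 1 + s := by simpa using hs
    · simpa using hX.integral_sq_kernel_le hh hkj
  calc ∫ ω, (∑ k, h (X j ω) (X k ω)) ^ 2 ∂P = ∑ k, ∫ ω, h (X j ω) (X k ω) ^ 2 ∂P :=
        hX.integral_sq_sum_kernel hh j
    _ ≤ ∑ k, ((if k = j then 1 else 0) + s) := Finset.sum_le_sum fun k _ => hterm k
    _ = 1 + n * s := by simp [Finset.sum_add_distrib]

lemma integral_sq_sum (hX : IsIIDSample X μ P) (hf_meas : Measurable f) (hf : MemLp f 2 μ)
    (hf_mean : ∫ x, f x ∂μ = 0) :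
    ∫ ω, (∑ j, f (X j ω)) ^ 2 ∂P = n * ∫ x, f x ^ 2 ∂μ := by
  have hmem (j : Fin n) : MemLp (f ∘ X j) 2 P :=
    hf.comp_measurePreserving (hX.measurePreserving j)
  have hmean (j : Fin n) : ∫ ω, (f ∘ X j) ω ∂P = 0 :=
    (hX.integral_comp j hf.aestronglyMeasurable).trans hf_mean
  have hsum_mem : MemLp (∑ j, f ∘ X j) 2 P := memLp_finsetSum' _ fun j _ => hmem j
  have hsum_mean : ∫ ω, (∑ j, f ∘ X j) ω ∂P = 0 := by
    simp only [Finset.sum_apply]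
    rw [integral_finsetSum _ fun j _ => (hmem j).integrable one_le_two]
    exact Finset.sum_eq_zero fun j _ => hmean j
  have hindep := hX.iIndepFun.comp (fun _ => f) fun _ => hf_meas
  calc ∫ ω, (∑ j, f (X j ω)) ^ 2 ∂P = Var[∑ j, f ∘ X j; P] := by
        rw [variance_of_integral_eq_zero hsum_mem.aemeasurable hsum_mean]
        simp only [Finset.sum_apply, Function.comp_apply]
    _ = ∑ j, Var[f ∘ X j; P] :=
        IndepFun.variance_sum (fun j _ => hmem j) fun j _ k _ hjk => hindep.indepFun hjk
    _ = ∑ _ : Fin n, ∫ x, f x ^ 2 ∂μ := Finset.sum_congr rfl fun j _ => by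
        rw [variance_of_integral_eq_zero (hmem j).aemeasurable (hmean j)]
        exact hX.integral_comp j (hf.aestronglyMeasurable.pow 2)
    _ = n * ∫ x, f x ^ 2 ∂μ := by simp

end IsIIDSample

lemma direction_dotProduct_self_le (x : Fin d → ℝ) : direction x ⬝ᵥ direction x ≤ 1 := by
  rcases eq_or_ne x 0 with rfl | hx
  · simp [direction]
  · exact (direction_dotProduct_self hx).le

/-- The kernel `⟨u, v⟩² - |v|² / d` in the directions `u` of `x` and `v` of `y`, which is centered
in `x` when `x` is standard normal. -/
noncomputable def directionKernel (y x : Fin d → ℝ) : ℝ :=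
  (direction x ⬝ᵥ direction y) ^ 2 - (direction y ⬝ᵥ direction y) / d

lemma abs_directionKernel_le (y x : Fin d → ℝ) : |directionKernel y x| ≤ 1 := by
  have hself := direction_dotProduct_self_le y
  have hsq := sq_direction_dotProduct_le x (direction y)
  have hdiv : (direction y ⬝ᵥ direction y) / d ≤ 1 := by
    rcases d.eq_zero_or_pos with rfl | hd
    · simp
    · exact div_le_one_of_le₀ (hself.trans (Nat.one_le_cast.2 hd)) (Nat.cast_nonneg d)
  have := dotProduct_self_nonneg (direction y)
  have : 0 ≤ (direction y ⬝ᵥ direction y) / d := by positivity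
  exact abs_sub_le_of_nonneg_of_le (sq_nonneg _) (hsq.trans hself) this hdiv

lemma isCenteredKernel_directionKernel (hd : 0 < d) :
    IsCenteredKernel (20000 / (d : ℝ) ^ 2) directionKernel (stdGaussianPi d) where
  measurable := by
    unfold directionKernel Function.uncurry; fun_prop
  abs_le_one := abs_directionKernel_le
  integral_eq_zero y := by
    have hint : Integrable (fun x => (direction x ⬝ᵥ direction y) ^ 2) (stdGaussianPi d) :=
      .of_bound (by fun_prop) 1 (ae_of_all _ fun x => by
        rw [Real.norm_of_nonneg (sq_nonneg _)]
        exact (sq_direction_dotProduct_le x _).trans (direction_dotProduct_self_le y))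
    unfold directionKernel
    rw [integral_sub hint (integrable_const _)]
    simp only [sq, integral_direction_dotProduct_mul, integral_const, probReal_univ, one_smul,
      sub_self]
  integral_sq_le y := by
    rcases eq_or_ne y 0 with rfl | hy
    · simp only [directionKernel, direction, smul_zero, dotProduct_zero, ne_eq, two_ne_zero,
        not_false_eq_true, zero_pow, zero_div, sub_self, integral_zero]
      positivity
    · simpa only [directionKernel, direction_dotProduct_self hy] using
        integral_sq_sq_direction_dotProduct_sub_le hd (direction_dotProduct_self hy)

lemma direction_dotProduct_scatter_sub_one_mulVec (hd : 0 < d) (hn : 0 < n)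
    (x : Fin n → Fin d → ℝ) (j : Fin n) :
    direction (x j) ⬝ᵥ (scatter (fun _ => (d : ℝ) / n) (fun k => direction (x k)) - 1) *ᵥ
      direction (x j) = d / n * ∑ k, directionKernel (x j) (x k) := by
  simp only [dotProduct_scatter_const_sub_one_mulVec, directionKernel, Finset.sum_sub_distrib,
    Finset.sum_const, Finset.card_univ, Fintype.card_fin, nsmul_eq_mul]
  field_simp

lemma IsIIDSample.measureReal_le_sum_sq_quadraticForm_le [IsProbabilityMeasure P]
    {X : Fin n → Ω → Fin d → ℝ} (hX : IsIIDSample X (stdGaussianPi d) P) (hd : 0 < d)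
    (hn : 0 < n) {δ : ℝ} (hδ : 0 < δ) :
    P.real {ω | δ * ((d : ℝ) / n * d) ≤ (d : ℝ) / n * ∑ j, (direction (X j ω) ⬝ᵥ
      (scatter (fun _ => (d : ℝ) / n) (fun k => direction (X k ω)) - 1) *ᵥ
        direction (X j ω)) ^ 2} ≤ ((d : ℝ) / n + 20000 / d) / δ := by
  have hker := isCenteredKernel_directionKernel hd
  have hint := hX.integrable_sq_sum_kernel hker
  simp only [fun ω => direction_dotProduct_scatter_sub_one_mulVec hd hn fun j => X j ω, mul_pow,
    ← Finset.mul_sum]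
  refine measureReal_mul_le_le_div (fun ω => by positivity)
    (((integrable_finsetSum _ fun j _ => hint j).const_mul _).const_mul _) (by positivity) hδ ?_
  rw [integral_const_mul, integral_const_mul, integral_finsetSum _ fun j _ => hint j]
  calc (d : ℝ) / n * ((d / n) ^ 2 * ∑ j, ∫ ω, (∑ k, directionKernel (X j ω) (X k ω)) ^ 2 ∂P)
      ≤ (d : ℝ) / n * ((d / n) ^ 2 * ∑ _ : Fin n, (1 + n * (20000 / (d : ℝ) ^ 2))) := by
        gcongr; exact hX.integral_sq_sum_kernel_le hker _
    _ = (d : ℝ) / n * d * (d / n + 20000 / d) := by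
        rw [Finset.sum_const, Finset.card_univ, Fintype.card_fin, nsmul_eq_mul]
        field_simp

/-- The matrix `d u uᵗ - x xᵗ`, with `u` the direction of `x`: the contribution of the sample point
`x` to the difference between the scatter matrices of the directions and of the sample. -/
noncomputable def scatterDeviation (x : Fin d → ℝ) : Matrix (Fin d) (Fin d) ℝ :=
  (d : ℝ) • vecMulVec (direction x) (direction x) - vecMulVec x x

lemma vecMulVec_self_eq_smul_direction (x : Fin d → ℝ) :
    vecMulVec x x = (x ⬝ᵥ x) • vecMulVec (direction x) (direction x) := by
  rcases eq_or_ne x 0 with rfl | hx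
  · simp
  · conv_lhs => rw [← sqrt_smul_direction hx]
    rw [smul_vecMulVec, vecMulVec_smul, smul_smul, Real.mul_self_sqrt (dotProduct_self_nonneg x)]

lemma scatterDeviation_eq_smul (x : Fin d → ℝ) :
    scatterDeviation x = ((d : ℝ) - x ⬝ᵥ x) • vecMulVec (direction x) (direction x) := by
  rw [scatterDeviation, vecMulVec_self_eq_smul_direction x, ← sub_smul]

lemma frobSq_vecMulVec_self (x : Fin d → ℝ) : frobSq (vecMulVec x x) = (x ⬝ᵥ x) ^ 2 := by
  simp only [frobSq, vecMulVec_apply, dotProduct, sq, Finset.sum_mul_sum]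
  exact Finset.sum_congr rfl fun i _ => Finset.sum_congr rfl fun j _ => by ring

lemma frobSq_scatterDeviation_le (x : Fin d → ℝ) :
    frobSq (scatterDeviation x) ≤ (x ⬝ᵥ x - d) ^ 2 := by
  rw [scatterDeviation_eq_smul, frobSq_smul, frobSq_vecMulVec_self, sub_sq_comm]
  exact mul_le_of_le_one_right (sq_nonneg _) (pow_le_one₀ (dotProduct_self_nonneg _)
    (direction_dotProduct_self_le x))

lemma measurable_scatterDeviation_apply (k l : Fin d) :
    Measurable fun x => scatterDeviation x k l := by
  simp only [scatterDeviation, Matrix.sub_apply, Matrix.smul_apply, vecMulVec_apply]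
  fun_prop

lemma memLp_two_scatterDeviation_apply (k l : Fin d) :
    MemLp (fun x => scatterDeviation x k l) 2 (stdGaussianPi d) := by
  refine ((memLp_const (d : ℝ)).sub memLp_two_dotProduct_self).mono
    (measurable_scatterDeviation_apply k l).aestronglyMeasurable (ae_of_all _ fun x => ?_)
  rw [scatterDeviation_eq_smul, Matrix.smul_apply, vecMulVec_apply, norm_smul, norm_mul]
  exact mul_le_of_le_one_right (norm_nonneg _)
    (mul_le_one₀ (abs_direction_apply_le x k) (abs_nonneg _) (abs_direction_apply_le x l))

lemma memLp_two_apply (k : Fin d) : MemLp (fun x => x k) 2 (stdGaussianPi d) :=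
  IsGaussian.memLp_two_id.comp_measurePreserving (measurePreserving_eval _ k)

lemma integral_apply_mul_apply (k l : Fin d) :
    ∫ x, x k * x l ∂(stdGaussianPi d) = if k = l then 1 else 0 := by
  split_ifs with hkl
  · subst hkl
    simpa [sq] using integral_sq_dotProduct (v := Pi.single k (1 : ℝ)) (by simp)
  · have hmean (i : Fin d) : ∫ x, x i ∂(stdGaussianPi d) = 0 := by
      have heval := measurePreserving_eval (fun _ : Fin d => gaussianReal 0 1) i
      rw [← integral_id_gaussianReal (μ := 0) (v := 1), ← heval.map_eq,
        integral_map heval.measurable.aemeasurable (by fun_prop)]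
    have hindep : IndepFun (fun x => x k) (fun x => x l) (stdGaussianPi d) :=
      (iIndepFun_pi (X := fun _ => id) fun _ => aemeasurable_id).indepFun hkl
    rw [hindep.integral_fun_mul_eq_mul_integral (memLp_two_apply k).aestronglyMeasurable
      (memLp_two_apply l).aestronglyMeasurable, hmean, zero_mul]

lemma integral_scatterDeviation_apply (k l : Fin d) :
    ∫ x, scatterDeviation x k l ∂(stdGaussianPi d) = 0 := by
  have hd : 0 < d := k.pos
  simp only [scatterDeviation, Matrix.sub_apply, Matrix.smul_apply, vecMulVec_apply, smul_eq_mul]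
  have hint : Integrable (fun x => x k * x l) (stdGaussianPi d) :=
    (memLp_two_apply k).integrable_mul (memLp_two_apply l)
  rw [integral_sub ((integrable_direction_mul k l).const_mul _) hint, integral_apply_mul_apply,
    integral_const_mul]
  split_ifs with hkl
  · subst hkl
    rw [integral_direction_mul_self]
    field_simp
    norm_num
  · rw [integral_direction_mul_of_ne hkl]
    norm_num

lemma sum_integral_sq_scatterDeviation_le :
    ∑ k : Fin d, ∑ l, ∫ x, scatterDeviation x k l ^ 2 ∂(stdGaussianPi d) ≤
      d * Var[fun x => x ^ 2; gaussianReal 0 1] := by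
  have hint (k l : Fin d) := (memLp_two_scatterDeviation_apply k l).integrable_sq
  rw [Finset.sum_congr rfl fun k _ => (integral_finsetSum _ fun l _ => hint k l).symm,
    ← integral_finsetSum _ fun k _ => integrable_finsetSum _ fun l _ => hint k l,
    ← integral_sq_dotProduct_self_sub]
  exact integral_mono
    (integrable_finsetSum _ fun k _ => integrable_finsetSum _ fun l _ => hint k l)
    (memLp_two_dotProduct_self.sub (memLp_const (d : ℝ))).integrable_sq frobSq_scatterDeviation_le

lemma frobSq_scatter_direction_sub_scatter (x : Fin n → Fin d → ℝ) :
    frobSq (scatter (fun _ => (d : ℝ) / n) (fun j => direction (x j)) -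
      scatter (fun _ => 1 / (n : ℝ)) x) =
      (1 / (n : ℝ)) ^ 2 * ∑ k, ∑ l, (∑ j, scatterDeviation (x j) k l) ^ 2 := by
  have hsum : scatter (fun _ => (d : ℝ) / n) (fun j => direction (x j)) -
      scatter (fun _ => 1 / (n : ℝ)) x = (1 / (n : ℝ)) • ∑ j, scatterDeviation (x j) := by
    simp only [scatter, scatterDeviation, ← Finset.sum_sub_distrib, Finset.smul_sum, smul_sub,
      smul_smul, one_div_mul_eq_div]
  rw [hsum, frobSq_smul]
  simp only [frobSq, Matrix.sum_apply]

lemma IsIIDSample.measureReal_le_frobSq_sub_le [IsProbabilityMeasure P]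
    {X : Fin n → Ω → Fin d → ℝ} (hX : IsIIDSample X (stdGaussianPi d) P) (hd : 0 < d)
    (hn : 0 < n) {δ : ℝ} (hδ : 0 < δ) :
    P.real {ω | δ * ((d : ℝ) / n * d) ≤
      frobSq (scatter (fun _ => (d : ℝ) / n) (fun j => direction (X j ω)) -
        scatter (fun _ => 1 / (n : ℝ)) fun j => X j ω)} ≤
      Var[fun x => x ^ 2; gaussianReal 0 1] / d / δ := by
  have hint (k l : Fin d) := hX.integrable_sq_sum (memLp_two_scatterDeviation_apply k l)
  have hint' (k : Fin d) := integrable_finsetSum Finset.univ fun l _ => hint k l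
  simp only [frobSq_scatter_direction_sub_scatter]
  refine measureReal_mul_le_le_div (fun ω => by positivity)
    ((integrable_finsetSum _ fun k _ => hint' k).const_mul _) (by positivity) hδ ?_
  rw [integral_const_mul, integral_finsetSum _ fun k _ => hint' k]
  simp only [integral_finsetSum _ fun l _ => hint _ l, fun k l => hX.integral_sq_sum
    (measurable_scatterDeviation_apply k l) (memLp_two_scatterDeviation_apply k l)
    (integral_scatterDeviation_apply k l), ← Finset.mul_sum]
  calc (1 / (n : ℝ)) ^ 2 *
        (n * ∑ k : Fin d, ∑ l, ∫ x, scatterDeviation x k l ^ 2 ∂(stdGaussianPi d))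
      ≤ (1 / (n : ℝ)) ^ 2 * (n * (d * Var[fun x => x ^ 2; gaussianReal 0 1])) := by
        gcongr; exact sum_integral_sq_scatterDeviation_le
    _ = (d : ℝ) / n * d * (Var[fun x => x ^ 2; gaussianReal 0 1] / d) := by field_simp

end SecondMoments

section Convergence

/-! ### Good samples and convergence in probability -/

open scoped Matrix.Norms.L2Operator

variable {n d : ℕ} {x u : Fin n → Fin d → ℝ} {S T : Matrix (Fin d) (Fin d) ℝ} {c K δ : ℝ}

lemma norm_inv_smul_le {E : Type*} [SeminormedAddCommGroup E] [NormedSpace ℝ E] {v : E} {η : ℝ}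
    (hη : 0 < η) (hv : ‖v‖ ≤ K * η) : ‖η⁻¹ • v‖ ≤ K := by
  rw [norm_smul, norm_inv, Real.norm_of_nonneg hη.le, inv_mul_le_iff₀ hη, mul_comm]
  exact hv

lemma abs_trace_smul_pow_sub_trace_smul_pow_le {ι : Type*} [Fintype ι] [DecidableEq ι] [Nonempty ι]
    {A B : Matrix ι ι ℝ} {η R : ℝ} (hη : 0 < η) (hA : ‖A‖ ≤ K * η) (hB : ‖B‖ ≤ K * η)
    (hAB : frobSq (A - B) ≤ R * (η ^ 2 * Fintype.card ι)) (m : ℕ) :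
    |1 / (Fintype.card ι : ℝ) * ((η⁻¹ • A) ^ m).trace -
      1 / (Fintype.card ι : ℝ) * ((η⁻¹ • B) ^ m).trace| ≤ m * K ^ (m - 1) * √R := by
  have hcard : (0 : ℝ) < Fintype.card ι := Nat.cast_pos.2 Fintype.card_pos
  have hA' := norm_inv_smul_le hη hA
  have : 0 ≤ K := (norm_nonneg _).trans hA'
  have hfrob : Fintype.card ι * frobSq (η⁻¹ • A - η⁻¹ • B) ≤ (Fintype.card ι : ℝ) ^ 2 * R := by
    rw [← smul_sub, frobSq_smul]
    calc Fintype.card ι * (η⁻¹ ^ 2 * frobSq (A - B))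
        ≤ Fintype.card ι * (η⁻¹ ^ 2 * (R * (η ^ 2 * Fintype.card ι))) := by gcongr
      _ = (Fintype.card ι : ℝ) ^ 2 * R := by field_simp
  rw [← mul_sub, abs_mul, abs_of_pos (one_div_pos.2 hcard), one_div, inv_mul_le_iff₀ hcard]
  calc |((η⁻¹ • A) ^ m).trace - ((η⁻¹ • B) ^ m).trace|
      ≤ m * K ^ (m - 1) * √(Fintype.card ι * frobSq (η⁻¹ • A - η⁻¹ • B)) :=
        abs_trace_pow_sub_trace_pow_le hA' (norm_inv_smul_le hη hB) m
    _ ≤ m * K ^ (m - 1) * √((Fintype.card ι : ℝ) ^ 2 * R) := by gcongr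
    _ = Fintype.card ι * (m * K ^ (m - 1) * √R) := by
        rw [Real.sqrt_mul (sq_nonneg _), Real.sqrt_sq hcard.le]
        ring

lemma exists_pos_mul_sqrt_le (a b : ℝ) {ε : ℝ} (hε : 0 < ε) : ∃ δ > 0, a * √(b * δ) ≤ ε := by
  have hlim : Tendsto (fun δ => a * √(b * δ)) (nhdsWithin 0 (Set.Ioi 0)) (nhds 0) := by
    refine tendsto_nhdsWithin_of_tendsto_nhds ?_
    have hcont : Continuous fun δ : ℝ => a * √(b * δ) := by fun_prop
    simpa using hcont.tendsto 0
  obtain ⟨δ, hδ, hδ_pos⟩ := ((hlim.eventually_le_const hε).and self_mem_nhdsWithin).exists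
  exact ⟨δ, hδ_pos, hδ⟩

lemma smul_sum_vecMulVec_eq_scatter (x : Fin n → Fin d → ℝ) :
    (n : ℝ)⁻¹ • ∑ j, vecMulVec (x j) (x j) = scatter (fun _ => 1 / (n : ℝ)) x := by
  simp only [scatter, Finset.smul_sum, one_div]

namespace IsTyler

lemma comp_direction (hT : IsTyler x T) (hx : ∀ j, x j ≠ 0) :
    IsTyler (fun j => direction (x j)) T := by
  refine ⟨hT.1, hT.2.1, hT.2.2.trans ?_⟩
  congr 1
  refine Finset.sum_congr rfl fun j _ => ?_
  have hr : √(x j ⬝ᵥ x j) ≠ 0 := (Real.sqrt_pos.2 (dotProduct_self_pos (hx j))).ne'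
  simp only [direction, mulVec_smul, smul_dotProduct, dotProduct_smul, smul_vecMulVec,
    vecMulVec_smul, smul_smul, smul_eq_mul]
  congr 1
  field_simp

lemma frobSq_sub_le (hT : IsTyler u T) (hd : 0 < d) (hu : ∀ j, u j ⬝ᵥ u j = 1) (hc : 0 < c)
    (hc1 : c ≤ 1) (hq : HasQuarticLowerBound c ((d : ℝ) ^ 2 / n) u) {η : ℝ}
    (hM : ‖scatter (fun _ => (d : ℝ) / n) u - 1‖ ≤ K * η) (hη : 4 / c * (K * η) ≤ 1 / 2)
    (hηδ : η ^ 2 ≤ δ)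
    (hz : (d : ℝ) / n * ∑ j, (u j ⬝ᵥ (scatter (fun _ => (d : ℝ) / n) u - 1) *ᵥ u j) ^ 2 ≤
      δ * (η ^ 2 * d))
    (hS : frobSq (scatter (fun _ => (d : ℝ) / n) u - S) ≤ δ * (η ^ 2 * d)) :
    frobSq (T - S) ≤ (2880 / c ^ 2 * (1 + (4 / c * K) ^ 4) + 2) * δ * (η ^ 2 * d) := by
  have hMc : K * η ≤ c / 8 := by
    rw [div_mul_eq_mul_div, div_le_iff₀ hc] at hη
    linarith
  have hinv : ‖T⁻¹ - 1‖ ≤ 4 / c * (K * η) :=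
    (hT.norm_inv_sub_one_le hd hu hc hq (by linarith)).trans (by gcongr)
  have hTM := hT.frobSq_sub_scatter_le hd hu hc hc1 hq (by linarith) (hinv.trans hη)
  have hfour : ‖T⁻¹ - 1‖ ^ 4 * d ≤ (4 / c * K) ^ 4 * (δ * (η ^ 2 * d)) :=
    calc ‖T⁻¹ - 1‖ ^ 4 * d ≤ (4 / c * (K * η)) ^ 4 * d := by gcongr
      _ = (4 / c * K) ^ 4 * (η ^ 2 * (η ^ 2 * d)) := by ring
      _ ≤ (4 / c * K) ^ 4 * (δ * (η ^ 2 * d)) := by gcongr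
  calc frobSq (T - S)
      ≤ 2 * frobSq (T - scatter (fun _ => (d : ℝ) / n) u) +
          2 * frobSq (scatter (fun _ => (d : ℝ) / n) u - S) := by
        rw [← sub_add_sub_cancel T (scatter (fun _ => (d : ℝ) / n) u) S]
        exact frobSq_add_le _ _
    _ ≤ 2 * (1440 / c ^ 2 * (δ * (η ^ 2 * d) + (4 / c * K) ^ 4 * (δ * (η ^ 2 * d)))) +
          2 * (δ * (η ^ 2 * d)) := by
        gcongr
        exact hTM.trans (by gcongr)
    _ = (2880 / c ^ 2 * (1 + (4 / c * K) ^ 4) + 2) * δ * (η ^ 2 * d) := by ring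

lemma norm_sub_one_le (hT : IsTyler u T) (hd : 0 < d) (hu : ∀ j, u j ⬝ᵥ u j = 1) (hc : 0 < c)
    (hq : HasQuarticLowerBound c ((d : ℝ) ^ 2 / n) u)
    (hM : 8 * ‖scatter (fun _ => (d : ℝ) / n) u - 1‖ ≤ c) :
    ‖T - 1‖ ≤ 8 / c * ‖scatter (fun _ => (d : ℝ) / n) u - 1‖ := by
  have : Nonempty (Fin d) := ⟨⟨0, hd⟩⟩
  have hinv := hT.norm_inv_sub_one_le hd hu hc hq hM
  have hhalf : ‖T⁻¹ - 1‖ ≤ 1 / 2 := hinv.trans (by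
    rw [div_mul_eq_mul_div, div_le_iff₀ hc]
    linarith)
  calc ‖T - 1‖ ≤ 2 * ‖T⁻¹ - 1‖ := norm_sub_one_le_of_mul_eq_one hT.mul_inv hhalf
    _ ≤ 2 * (4 / c * ‖scatter (fun _ => (d : ℝ) / n) u - 1‖) := by gcongr
    _ = 8 / c * ‖scatter (fun _ => (d : ℝ) / n) u - 1‖ := by ring

end IsTyler

/-- The deterministic conditions on a sample under which Tyler's estimator and the sample
covariance matrix are close: both scatter matrices are within `K √(d/n)` of the identity in operator
norm, the directions satisfy a quartic lower bound, and the two second-moment quantities are at most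
a fraction `δ` of `d²/n`. -/
structure IsGoodSample (c K δ : ℝ) (x : Fin n → Fin d → ℝ) : Prop where
  ne_zero (j : Fin n) : x j ≠ 0
  norm_scatter_direction_sub_one_le :
    ‖scatter (fun _ => (d : ℝ) / n) (fun j => direction (x j)) - 1‖ ≤ K * √((d : ℝ) / n)
  norm_scatter_sub_one_le : ‖scatter (fun _ => 1 / (n : ℝ)) x - 1‖ ≤ K * √((d : ℝ) / n)
  hasQuarticLowerBound : HasQuarticLowerBound c ((d : ℝ) ^ 2 / n) fun j => direction (x j)
  sum_sq_quadraticForm_lt : (d : ℝ) / n * ∑ j, (direction (x j) ⬝ᵥ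
    (scatter (fun _ => (d : ℝ) / n) (fun k => direction (x k)) - 1) *ᵥ direction (x j)) ^ 2 <
      δ * ((d : ℝ) / n * d)
  frobSq_sub_lt : frobSq (scatter (fun _ => (d : ℝ) / n) (fun j => direction (x j)) -
    scatter (fun _ => 1 / (n : ℝ)) x) < δ * ((d : ℝ) / n * d)

lemma IsGoodSample.abs_trace_pow_sub_trace_pow_le (hx : IsGoodSample c K δ x) (hT : IsTyler x T)
    (hd : 0 < d) (hn : 0 < n) (hc : 0 < c) (hc1 : c ≤ 1) (hK : 4 / c * (K * √(d / n)) ≤ 1 / 2)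
    (hδ : (d : ℝ) / n ≤ δ) (m : ℕ) :
    |1 / (d : ℝ) * ((√((n : ℝ) / d) • (T - 1)) ^ m).trace - 1 / (d : ℝ) * ((√((n : ℝ) / d) •
      ((n : ℝ)⁻¹ • ∑ j, vecMulVec (x j) (x j) - 1)) ^ m).trace| ≤
      m * (8 / c * K) ^ (m - 1) * √((2880 / c ^ 2 * (1 + (4 / c * K) ^ 4) + 2) * δ) := by
  have : Nonempty (Fin d) := ⟨⟨0, hd⟩⟩
  have hη : 0 < √((d : ℝ) / n) := by positivity
  have hη_sq : √((d : ℝ) / n) ^ 2 = d / n := Real.sq_sqrt (by positivity)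
  have hη_inv : √((n : ℝ) / d) = (√((d : ℝ) / n))⁻¹ := by rw [← Real.sqrt_inv, inv_div]
  obtain ⟨hne, hM, hS, hq, hz, hMS⟩ := hx
  have hu (j : Fin n) := direction_dotProduct_self (hne j)
  have hT' := hT.comp_direction hne
  rw [← hη_sq] at hδ
  have hM' : 8 * ‖scatter (fun _ => (d : ℝ) / n) (fun j => direction (x j)) - 1‖ ≤ c := by
    rw [div_mul_eq_mul_div, div_le_iff₀ hc] at hK
    linarith
  have hTnorm : ‖T - 1‖ ≤ 8 / c * K * √((d : ℝ) / n) := by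
    rw [mul_assoc]
    exact (hT'.norm_sub_one_le hd hu hc hq hM').trans (by gcongr)
  have hSnorm : ‖scatter (fun _ => 1 / (n : ℝ)) x - 1‖ ≤ 8 / c * K * √((d : ℝ) / n) := by
    rw [mul_assoc]
    exact hS.trans (le_mul_of_one_le_left ((norm_nonneg _).trans hS)
      ((one_le_div hc).2 (by linarith)))
  have hfrob := hT'.frobSq_sub_le hd hu hc hc1 hq hM hK hδ (by simpa only [hη_sq] using hz.le)
    (by simpa only [hη_sq] using hMS.le)
  rw [← sub_sub_sub_cancel_right T _ 1] at hfrob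
  rw [hη_inv, smul_sum_vecMulVec_eq_scatter]
  simpa only [Fintype.card_fin] using
    abs_trace_smul_pow_sub_trace_smul_pow_le hη hTnorm hSnorm (by simpa using hfrob) m

section Probability

variable {Ω : Type*} [MeasurableSpace Ω] {P : Measure Ω}

lemma measureReal_union_le_add {A B : Set Ω} {a b : ℝ} (hA : P.real A ≤ a) (hB : P.real B ≤ b) :
    P.real (A ∪ B) ≤ a + b :=
  (measureReal_union_le A B).trans (add_le_add hA hB)

variable [IsProbabilityMeasure P]

lemma IsIIDSample.measureReal_not_isGoodSample_le {X : Fin n → Ω → Fin d → ℝ}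
    (hX : IsIIDSample X (stdGaussianPi d) P) (hd : 0 < d) (hn : 0 < n)
    (hη : 2560 * √((d : ℝ) / n) ≤ 1) (hδ : 0 < δ) :
    P.real {ω | ¬ IsGoodSample ((1 / 4000) ^ 2) 2560 δ fun j => X j ω} ≤
      2 * Real.exp (-2 * d) + 2 * Real.exp (-2 * d) + 2 * Real.exp (60 * d - n / 10 ^ 9) +
        ((d : ℝ) / n + 20000 / d) / δ + Var[fun x => x ^ 2; gaussianReal 0 1] / d / δ := by
  have hη_sq : √((d : ℝ) / n) ^ 2 * n = d := by
    rw [Real.sq_sqrt (by positivity)]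
    field_simp
  have hη_le : √((d : ℝ) / n) ≤ 1 := by linarith [Real.sqrt_nonneg ((d : ℝ) / n)]
  have hne : ∀ᵐ ω ∂P, ∀ j, X j ω ≠ 0 :=
    ae_all_iff.2 fun j => (hX.measurePreserving j).quasiMeasurePreserving.ae
      (ae_ne_zero_stdGaussianPi hd)
  have hdir := hX.measureReal_lt_norm_scatter_sub_one_le hn (by norm_num)
    (fun v hv => isCenteredSubexp_sq_direction_dotProduct hd hv) (Real.sqrt_nonneg _) hη_le hη_sq
  have hcov := hX.measureReal_lt_norm_scatter_sub_one_le (Y := id) hn (by norm_num)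
    (fun v hv => isCenteredSubexp_sq_dotProduct hv) (Real.sqrt_nonneg _) hη_le hη_sq
  norm_num only at hdir hcov
  refine (ENNReal.toReal_mono (measure_ne_top _ _) (measure_mono_ae ?_)).trans
    (measureReal_union_le_add (measureReal_union_le_add (measureReal_union_le_add
      (measureReal_union_le_add hdir hcov) (hX.measureReal_not_hasQuarticLowerBound_le hn hd))
      (hX.measureReal_le_sum_sq_quadraticForm_le hd hn hδ))
      (hX.measureReal_le_frobSq_sub_le hd hn hδ))
  filter_upwards [hne] with ω hω hbad
  by_contra hgood
  change ω ∉ (_ : Set Ω) at hgood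
  simp only [Set.mem_union, Set.mem_ofPred_eq, not_or, not_lt, not_le, not_and_not_right] at hgood
  obtain ⟨⟨⟨⟨hM, hS⟩, hq⟩, hz⟩, hMS⟩ := hgood
  exact hbad ⟨hω, hM, hS, hq (hM.trans hη), hz, hMS⟩

lemma tendsto_measure_not_isGoodSample {n : ℕ → ℕ} (hn : Tendsto n atTop atTop)
    (hdn : Tendsto (fun d : ℕ => (d : ℝ) / n d) atTop (nhds 0))
    {X : ∀ d : ℕ, Fin (n d) → Ω → Fin d → ℝ}
    (hX : ∀ d, IsIIDSample (X d) (stdGaussianPi d) P) (hδ : 0 < δ) :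
    Tendsto (fun d => P {ω | ¬ IsGoodSample ((1 / 4000) ^ 2) 2560 δ fun j => X d j ω}) atTop
      (nhds 0) := by
  have hexp : Tendsto (fun d : ℕ => Real.exp (-2 * d)) atTop (nhds 0) :=
    Real.tendsto_exp_atBot.comp
      (tendsto_natCast_atTop_atTop.const_mul_atTop_of_neg (by norm_num))
  have hdiv (a : ℝ) : Tendsto (fun d : ℕ => a / d) atTop (nhds 0) :=
    tendsto_const_nhds.div_atTop tendsto_natCast_atTop_atTop
  have hlim := ENNReal.tendsto_ofReal
    (((hexp.const_mul 6).add ((hdn.add (hdiv 20000)).div_const δ)).add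
      ((hdiv Var[fun x => x ^ 2; gaussianReal 0 1]).div_const δ))
  simp only [mul_zero, add_zero, zero_div, ENNReal.ofReal_zero] at hlim
  have hsmall := hdn.eventually_le_const (u := 1 / (62 * 10 ^ 9)) (by norm_num)
  refine tendsto_of_tendsto_of_tendsto_of_le_of_le' tendsto_const_nhds hlim
    (Eventually.of_forall fun _ => zero_le) ?_
  filter_upwards [eventually_gt_atTop 0, hn.eventually_gt_atTop 0, hsmall] with d hd hnd hdn_le
  have hη : 2560 * √((d : ℝ) / n d) ≤ 1 := by
    rw [mul_comm, ← le_div_iff₀ (by norm_num), Real.sqrt_le_left (by norm_num)]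
    exact hdn_le.trans (by norm_num)
  have hexp_le : Real.exp (60 * d - n d / 10 ^ 9) ≤ Real.exp (-2 * d) := by
    rw [div_le_div_iff₀ (by positivity) (by norm_num)] at hdn_le
    refine Real.exp_le_exp.2 ?_
    rw [sub_le_iff_le_add, ← sub_le_iff_le_add', le_div_iff₀ (by norm_num)]
    linarith
  rw [← ofReal_measureReal]
  refine ENNReal.ofReal_le_ofReal (((hX d).measureReal_not_isGoodSample_le hd hnd hη hδ).trans ?_)
  linarith

end Probability

end Convergence

/-- **Equation (6) of the paper:** for an i.i.d. standard normal sample `N_d(0, I)` with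
`n(d) → ∞` and `d/n(d) → 0`, and `T*_d = √(n(d)/d)·(T_d − I)`,
`S*_d = √(n(d)/d)·(S_d − I)`, for every fixed integer `m ≥ 1` the difference of the
normalized traces `|(1/d)·tr((T*_d)^m) − (1/d)·tr((S*_d)^m)|` converges in probability
to `0` as `d → ∞`. -/
theorem trace_pow_tylerStar_sub_covStar_tendsto_zero
    {Ωs : Type*} [MeasurableSpace Ωs] (P : Measure Ωs) [IsProbabilityMeasure P]
    (n : ℕ → ℕ) (hn : Tendsto n atTop atTop)
    (hdn : Tendsto (fun d : ℕ => (d : ℝ) / (n d : ℝ)) atTop (nhds 0))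
    (X : ∀ d : ℕ, Fin (n d) → Ωs → Fin d → ℝ)
    (hmeas : ∀ d j, Measurable (X d j))
    (hindep : ∀ d, iIndepFun (X d) P)
    (hgauss : ∀ d j,
      Measure.map (X d j) P = Measure.pi fun _ : Fin d => gaussianReal 0 1)
    (T : ∀ d : ℕ, Ωs → Matrix (Fin d) (Fin d) ℝ)
    (hT : ∀ d, ∀ᵐ ω ∂P, IsTyler (fun j => X d j ω) (T d ω))
    (m : ℕ) (hm : 1 ≤ m) :
    ∀ ε > (0 : ℝ),
      Tendsto (fun d : ℕ =>
          P {ω | |(1 / (d : ℝ)) * ((Real.sqrt ((n d : ℝ) / d) • (T d ω - 1)) ^ m).trace -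
                 (1 / (d : ℝ)) * ((Real.sqrt ((n d : ℝ) / d) •
                   ((n d : ℝ)⁻¹ • ∑ j : Fin (n d),
                     vecMulVec (X d j ω) (X d j ω) - 1)) ^ m).trace| > ε})
        atTop (nhds 0) := by
  intro ε hε
  let c : ℝ := (1 / 4000) ^ 2
  have hc1 : c ≤ 1 := by norm_num [c]
  let K : ℝ := 2560
  obtain ⟨δ, hδ, hδε⟩ := exists_pos_mul_sqrt_le (m * (8 / c * K) ^ (m - 1))
    (2880 / c ^ 2 * (1 + (4 / c * K) ^ 4) + 2) hε
  have hbad := tendsto_measure_not_isGoodSample hn hdn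
    (fun d => ⟨hmeas d, hindep d, hgauss d⟩) hδ
  have hsqrt : Tendsto (fun d : ℕ => 4 / c * (K * √((d : ℝ) / n d))) atTop (nhds 0) := by
    simpa using (hdn.sqrt.const_mul K).const_mul (4 / c)
  refine tendsto_of_tendsto_of_tendsto_of_le_of_le' tendsto_const_nhds hbad
    (Eventually.of_forall fun _ => zero_le) ?_
  filter_upwards [eventually_gt_atTop 0, hn.eventually_gt_atTop 0, hdn.eventually_le_const hδ,
    hsqrt.eventually_le_const one_half_pos] with d hd hnd hdn_le hsqrt_le
  refine measure_mono_ae ?_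
  filter_upwards [hT d] with ω hTω hω hgood
  exact hω.not_ge ((hgood.abs_trace_pow_sub_trace_pow_le hTω hd hnd (by positivity) hc1 hsqrt_le
    hdn_le m).trans hδε)
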